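/- Let A be a unital C*-algebra of stable rank one (not assumed separable) and let k ∈ ℕ with k ≥ 1. Then A has no nonzero representation of dimension less than k if and only if there exists a *-homomorphism φ : M_k(C_0((0,1])) → A whose range generates A as a closed two-sided ideal (i.e., φ has full range). -/

import Mathlib

namespace GH

section ring
variable {R : Type*} [Ring R]

lemma exists_coatom (I : TwoSidedIdeal R) (hI : (1:R) ∉ I) :
    ∃ J : TwoSidedIdeal R, IsCoatom J ∧ I ≤ J := by
  obtain ⟨m, hm, hmax⟩ := zorn_le_nonempty₀ {J : TwoSidedIdeal R | (1:R) ∉ J} (by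
    intro c hc hchain y hy
    have key : ∀ {J K : TwoSidedIdeal R}, J ∈ c → K ∈ c → J ≤ K ∨ K ≤ J := by
      intro J K hJ hK
      exact hchain.total hJ hK
    refine ⟨TwoSidedIdeal.mk' {x | ∃ J ∈ c, x ∈ J} ⟨y, hy, y.zero_mem⟩ ?_ ?_ ?_ ?_, ?_, ?_⟩
    · rintro a b ⟨J, hJ, ha⟩ ⟨K, hK, hb⟩
      rcases key hJ hK with h | h
      · exact ⟨K, hK, K.add_mem (h ha) hb⟩
      · exact ⟨J, hJ, J.add_mem ha (h hb)⟩
    · rintro a ⟨J, hJ, ha⟩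
      exact ⟨J, hJ, J.neg_mem ha⟩
    · rintro a b ⟨J, hJ, ha⟩
      exact ⟨J, hJ, J.mul_mem_left _ _ ha⟩
    · rintro a b ⟨J, hJ, ha⟩
      exact ⟨J, hJ, J.mul_mem_right _ _ ha⟩
    · simp only [Set.mem_ofPred_eq, TwoSidedIdeal.mem_mk']
      rintro ⟨J, hJ, h1⟩
      exact hc hJ h1
    · intro z hz x hx
      rw [TwoSidedIdeal.mem_mk']
      exact ⟨z, hz, hx⟩) I hI
  refine ⟨m, ⟨?_, ?_⟩, hm⟩
  · rintro rfl
    exact hmax.1 (TwoSidedIdeal.mem_top _)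
  · intro b hb
    by_contra hne
    have : (1:R) ∉ b := by
      intro h
      exact hne ((TwoSidedIdeal.one_mem_iff b).1 h)
    exact absurd (hmax.2 this hb.le) (not_le_of_gt hb)

lemma one_notMem {J : TwoSidedIdeal R} (hJ : IsCoatom J) : (1:R) ∉ J := by
  intro h
  exact hJ.1 ((TwoSidedIdeal.one_mem_iff J).1 h)

lemma unit_notMem {J : TwoSidedIdeal R} (hJ : IsCoatom J) {u : R} (hu : IsUnit u) : u ∉ J := by
  intro h
  obtain ⟨v, rfl⟩ := hu
  apply one_notMem hJ
  have := J.mul_mem_left (↑v⁻¹) _ h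
  simpa using this

lemma coatom_eq {J : TwoSidedIdeal R} (hJ : IsCoatom J) {K : TwoSidedIdeal R} (h : J ≤ K)
    (h1 : (1:R) ∉ K) : ∀ x, x ∈ K → x ∈ J := by
  intro x hx
  by_contra hne
  have hlt : J < K := lt_of_le_of_ne h (by rintro rfl; exact hne hx)
  exact h1 ((TwoSidedIdeal.one_mem_iff K).2 (hJ.2 _ hlt))

lemma prime {J : TwoSidedIdeal R} (hJ : IsCoatom J) {a b : R} (ha : a ∉ J) (hb : b ∉ J) :
    ∃ t, a * t * b ∉ J := by
  by_contra! hcon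
  refine ha (coatom_eq hJ (K := TwoSidedIdeal.mk' {x | ∀ t, x * t * b ∈ J} ?_ ?_ ?_ ?_ ?_) ?_ ?_ a ?_)
  · intro t; simp [J.zero_mem]
  · intro x y hx hy t
    have := J.add_mem (hx t) (hy t)
    simpa [add_mul] using this
  · intro x hx t
    simpa using J.neg_mem (hx t)
  · intro x y hy t
    have := J.mul_mem_left x _ (hy t)
    simpa [mul_assoc] using this
  · intro x y hx t
    have := hx (y * t)
    simpa [mul_assoc] using this
  · intro x hx
    rw [TwoSidedIdeal.mem_mk']
    intro t
    exact J.mul_mem_right _ _ (J.mul_mem_right _ _ hx)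
  · rw [TwoSidedIdeal.mem_mk']
    intro h
    apply hb
    simpa using h 1
  · rw [TwoSidedIdeal.mem_mk']
    exact hcon

end ring

section cstar
variable {A : Type*} [CStarAlgebra A]

def Full (x : A) : Prop := ∀ J : TwoSidedIdeal A, IsCoatom J → x ∉ J

lemma isUnit_of_close {x : A} (h : ‖1 - x‖ < 1) : IsUnit x := by
  have := isUnit_one_sub_of_norm_lt_one h
  simpa using this

lemma one_le_dist {J : TwoSidedIdeal A} (hJ : (1:A) ∉ J) {z : A} (hz : z ∈ J) :
    1 ≤ ‖1 - z‖ := by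
  by_contra! h
  obtain ⟨v, hv⟩ := isUnit_of_close h
  apply hJ
  have := J.mul_mem_left (↑v⁻¹) _ hz
  rw [← hv] at this
  simpa using this

lemma mem_of_approx {J : TwoSidedIdeal A} (hJ : IsCoatom J) {x : A}
    (h : ∀ ε > 0, ∃ z ∈ J, ‖x - z‖ < ε) : x ∈ J := by
  refine coatom_eq hJ (K := TwoSidedIdeal.mk' (closure (J : Set A)) ?_ ?_ ?_ ?_ ?_) ?_ ?_ x ?_
  · exact subset_closure J.zero_mem
  · intro x y hx hy
    exact map_mem_closure₂ continuous_add hx hy (fun a ha b hb => J.add_mem ha hb)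
  · intro x hx
    exact map_mem_closure continuous_neg hx (fun a ha => J.neg_mem ha)
  · intro x y hy
    exact map_mem_closure (continuous_const_mul x) hy (fun a ha => J.mul_mem_left _ _ ha)
  · intro x y hx
    exact map_mem_closure (f := fun a => a * y) (continuous_mul_const y) hx (fun a ha => J.mul_mem_right _ _ ha)
  · intro x hx
    rw [TwoSidedIdeal.mem_mk']
    exact subset_closure hx
  · rw [TwoSidedIdeal.mem_mk']
    intro h
    rw [Metric.mem_closure_iff] at h
    obtain ⟨b, hb, hlt⟩ := h 1 one_pos
    have := one_le_dist (one_notMem hJ) hb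
    rw [dist_eq_norm] at hlt
    linarith
  · rw [TwoSidedIdeal.mem_mk', Metric.mem_closure_iff]
    intro ε hε
    obtain ⟨z, hz, hlt⟩ := h ε hε
    exact ⟨z, hz, by rwa [dist_eq_norm]⟩

lemma coatom_closed {J : TwoSidedIdeal A} (hJ : IsCoatom J) : IsClosed (J : Set A) := by
  rw [← closure_subset_iff_isClosed]
  intro x hx
  apply mem_of_approx hJ
  intro ε hε
  obtain ⟨z, hz, h⟩ := Metric.mem_closure_iff.1 hx ε hε
  exact ⟨z, hz, by rwa [← dist_eq_norm]⟩

lemma compact {ι : Type*} (y : ι → A) (h : ∀ J : TwoSidedIdeal A, IsCoatom J → ∃ i, y i ∉ J) :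
    ∃ F : Finset ι, ∃ ε > 0, ∀ J : TwoSidedIdeal A, IsCoatom J → ∃ i ∈ F, ∀ z ∈ J, ε ≤ ‖y i - z‖ := by
  classical
  have h1 : (1:A) ∈ TwoSidedIdeal.span (Set.range y) := by
    by_contra hne
    obtain ⟨J, hJ, hle⟩ := exists_coatom _ hne
    obtain ⟨i, hi⟩ := h J hJ
    exact hi (hle (TwoSidedIdeal.subset_span ⟨i, rfl⟩))
  have key : ∀ x ∈ TwoSidedIdeal.span (Set.range y), ∃ F : Finset ι, ∃ C : ℝ, 0 ≤ C ∧
      ∀ J : TwoSidedIdeal A, ∀ η : ℝ, 0 ≤ η → (∀ i ∈ F, ∃ z ∈ J, ‖y i - z‖ ≤ η) →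
        ∃ z ∈ J, ‖x - z‖ ≤ C * η := by
    intro x hx
    induction hx using TwoSidedIdeal.span_induction with
    | mem x hx =>
      obtain ⟨i, rfl⟩ := hx
      refine ⟨{i}, 1, zero_le_one, ?_⟩
      intro J η _ h
      simpa using h i (by simp)
    | zero => exact ⟨∅, 0, le_rfl, fun J η _ _ => ⟨0, J.zero_mem, by simp⟩⟩
    | add a b _ _ iha ihb =>
      obtain ⟨F, C, hC, hF⟩ := iha
      obtain ⟨G, D, hD, hG⟩ := ihb
      refine ⟨F ∪ G, C + D, by positivity, ?_⟩
      intro J η hη h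
      obtain ⟨z, hz, hz'⟩ := hF J η hη (fun i hi => h i (Finset.mem_union_left _ hi))
      obtain ⟨w, hw, hw'⟩ := hG J η hη (fun i hi => h i (Finset.mem_union_right _ hi))
      refine ⟨z + w, J.add_mem hz hw, ?_⟩
      calc ‖a + b - (z + w)‖ = ‖(a - z) + (b - w)‖ := by congr 1; abel
        _ ≤ _ := norm_add_le _ _
        _ ≤ _ := by rw [add_mul]; gcongr
    | neg a _ iha =>
      obtain ⟨F, C, hC, hF⟩ := iha
      refine ⟨F, C, hC, ?_⟩
      intro J η hη h
      obtain ⟨z, hz, hz'⟩ := hF J η hη h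
      refine ⟨-z, J.neg_mem hz, ?_⟩
      rwa [← norm_neg, neg_sub_neg, neg_sub, ] 
    | left_absorb a b _ iha =>
      obtain ⟨F, C, hC, hF⟩ := iha
      refine ⟨F, ‖a‖ * C, by positivity, ?_⟩
      intro J η hη h
      obtain ⟨z, hz, hz'⟩ := hF J η hη h
      refine ⟨a * z, J.mul_mem_left _ _ hz, ?_⟩
      rw [← mul_sub, mul_assoc]
      exact (norm_mul_le _ _).trans (by gcongr)
    | right_absorb b a _ iha =>
      obtain ⟨F, C, hC, hF⟩ := iha
      refine ⟨F, ‖b‖ * C, by positivity, ?_⟩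
      intro J η hη h
      obtain ⟨z, hz, hz'⟩ := hF J η hη h
      refine ⟨z * b, J.mul_mem_right _ _ hz, ?_⟩
      rw [← sub_mul, mul_assoc, mul_comm]
      exact (norm_mul_le _ _).trans (by gcongr)
  obtain ⟨F, C, hC, hF⟩ := key 1 h1
  refine ⟨F, 1 / (C + 1), by positivity, ?_⟩
  intro J hJ
  by_contra! hcon
  obtain ⟨z, hz, hle⟩ := hF J (1 / (C + 1)) (by positivity) (fun i hi => by
    obtain ⟨z, hz, h⟩ := hcon i hi
    exact ⟨z, hz, h.le⟩)
  have := one_le_dist (one_notMem hJ) hz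
  have h2 : C * (1 / (C + 1)) < 1 := by
    rw [mul_one_div, div_lt_one (by positivity)]; linarith
  linarith

lemma Full.open {x : A} (hx : Full x) : ∃ ε > 0, ∀ x', ‖x - x'‖ < ε → Full x' := by
  obtain ⟨F, ε, hε, h⟩ := compact (fun _ : Unit => x) (fun J hJ => ⟨(), hx J hJ⟩)
  refine ⟨ε, hε, ?_⟩
  intro x' hlt J hJ hmem
  obtain ⟨i, -, hi⟩ := h J hJ
  have := hi x' hmem
  linarith

lemma notMem.open {J : TwoSidedIdeal A} (hJ : IsCoatom J) {x : A} (hx : x ∉ J) :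
    ∃ ε > 0, ∀ x', ‖x - x'‖ < ε → x' ∉ J := by
  by_contra! hcon
  apply hx
  apply mem_of_approx hJ
  intro ε hε
  obtain ⟨x', h1, h2⟩ := hcon ε hε
  exact ⟨x', h2, h1⟩

lemma Full.one : Full (1:A) := fun _ hJ => one_notMem hJ

lemma Full.of_mul_left {a b : A} (h : Full (a * b)) : Full b :=
  fun J hJ hb => h J hJ (J.mul_mem_left _ _ hb)
lemma Full.of_mul_right {a b : A} (h : Full (a * b)) : Full a :=
  fun J hJ hb => h J hJ (J.mul_mem_right _ _ hb)

end cstar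
end GH


namespace GH
variable {A : Type*} [CStarAlgebra A]

lemma cfcmul {h : A} (f g k : ℝ → ℝ) (hf : Continuous f) (hg : Continuous g)
    (hk : ∀ t, f t * g t = k t) : cfc f h * cfc g h = cfc k h := by
  rw [← cfc_mul f g h hf.continuousOn hg.continuousOn]
  congr 1
  funext t
  exact hk t

structure CF (h : A) (δ : ℝ) where
  r : A
  γ : A
  e : A
  m : A
  g : A
  g' : A
  gr : A
  sr : IsSelfAdjoint r
  sγ : IsSelfAdjoint γ
  se : IsSelfAdjoint e
  sm : IsSelfAdjoint m
  sg : IsSelfAdjoint g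
  sg' : IsSelfAdjoint g'
  sgr : IsSelfAdjoint gr
  cr : ∀ b, Commute h b → Commute r b
  cγ : ∀ b, Commute h b → Commute γ b
  ce : ∀ b, Commute h b → Commute e b
  cm : ∀ b, Commute h b → Commute m b
  cg : ∀ b, Commute h b → Commute g b
  cg' : ∀ b, Commute h b → Commute g' b
  cgr : ∀ b, Commute h b → Commute gr b
  rγ : r * γ = 0
  r1 : r = 1 - h * gr
  γe : γ * e = e
  mm : m * m * h * e = e
  eg : e = h * g
  γg : γ = h * g'
  ne : ‖e‖ ≤ 1
  small : (∀ t ∈ spectrum ℝ h, 0 ≤ t) → ‖(1 - e) * h * (1 - e)‖ ≤ δ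

noncomputable def clp (x : ℝ) : ℝ := max 0 (min 1 x)

lemma clp_cont : Continuous clp := by unfold clp; fun_prop
lemma clp_nonneg (x : ℝ) : 0 ≤ clp x := le_max_left _ _
lemma clp_le (x : ℝ) : clp x ≤ 1 := max_le zero_le_one (min_le_left _ _)
lemma clp_of_le {x : ℝ} (h : x ≤ 0) : clp x = 0 := by
  unfold clp; exact max_eq_left ((min_le_right _ _).trans h)
lemma clp_of_ge {x : ℝ} (h : 1 ≤ x) : clp x = 1 := by
  unfold clp; rw [min_eq_left h]; exact max_eq_right zero_le_one

lemma exists_CF (h : A) (hh : IsSelfAdjoint h) (δ : ℝ) (hδ : 0 < δ) : Nonempty (CF h δ) := by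
  set d := δ / 3 with hd
  have d0 : 0 < d := by positivity
  have mpos : ∀ t : ℝ, 0 < max t d := fun t => lt_max_of_lt_right d0
  have mne : ∀ t : ℝ, max t d ≠ 0 := fun t => (mpos t).ne'
  have cinv : Continuous fun t : ℝ => (max t d)⁻¹ :=
    Continuous.inv₀ (by fun_prop) mne
  have csq : Continuous fun t : ℝ => (√(max t d))⁻¹ :=
    Continuous.inv₀ (by fun_prop) (fun t => (Real.sqrt_pos.2 (mpos t)).ne')
  have cγ : Continuous fun t : ℝ => clp (t / d - 1) := clp_cont.comp (by fun_prop)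
  have ce : Continuous fun t : ℝ => clp (t / d - 2) := clp_cont.comp (by fun_prop)
  have cr : Continuous fun t : ℝ => 1 - t * (max t d)⁻¹ := by fun_prop
  have css : Continuous fun t : ℝ => (√(max t d))⁻¹ * (√(max t d))⁻¹ := csq.mul csq
  have css' : Continuous fun t : ℝ => (√(max t d))⁻¹ * (√(max t d))⁻¹ * t := css.mul continuous_id'
  have cei : Continuous fun t : ℝ => clp (t / d - 2) * (max t d)⁻¹ := ce.mul cinv
  have cγi : Continuous fun t : ℝ => clp (t / d - 1) * (max t d)⁻¹ := cγ.mul cinv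
  have hid : cfc (fun t : ℝ => t) h = h := cfc_id' ℝ h
  have e0 : ∀ t, t ≤ 2 * d → clp (t / d - 2) = 0 := by
    intro t ht
    apply clp_of_le
    have : t / d ≤ 2 := by rw [div_le_iff₀ d0]; exact ht
    linarith
  have γ0 : ∀ t, t ≤ d → clp (t / d - 1) = 0 := by
    intro t ht
    apply clp_of_le
    have : t / d ≤ 1 := by rw [div_le_iff₀ d0]; linarith
    linarith
  have γ1 : ∀ t, 2 * d ≤ t → clp (t / d - 1) = 1 := by
    intro t ht
    apply clp_of_ge
    have : 2 ≤ t / d := by rw [le_div_iff₀ d0]; exact ht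
    linarith
  have e1 : ∀ t, 3 * d ≤ t → clp (t / d - 2) = 1 := by
    intro t ht
    apply clp_of_ge
    have : 3 ≤ t / d := by rw [le_div_iff₀ d0]; exact ht
    linarith
  refine ⟨⟨cfc (fun t : ℝ => 1 - t * (max t d)⁻¹) h, cfc (fun t : ℝ => clp (t / d - 1)) h,
    cfc (fun t : ℝ => clp (t / d - 2)) h, cfc (fun t : ℝ => (√(max t d))⁻¹) h,
    cfc (fun t : ℝ => clp (t / d - 2) * (max t d)⁻¹) h,
    cfc (fun t : ℝ => clp (t / d - 1) * (max t d)⁻¹) h,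
    cfc (fun t : ℝ => (max t d)⁻¹) h, 
    IsSelfAdjoint.cfc, IsSelfAdjoint.cfc, IsSelfAdjoint.cfc, IsSelfAdjoint.cfc,
    IsSelfAdjoint.cfc, IsSelfAdjoint.cfc, IsSelfAdjoint.cfc,
    fun b hb => hb.cfc_real _, fun b hb => hb.cfc_real _, fun b hb => hb.cfc_real _,
    fun b hb => hb.cfc_real _, fun b hb => hb.cfc_real _, fun b hb => hb.cfc_real _,
    fun b hb => hb.cfc_real _, ?_, ?_, ?_, ?_, ?_, ?_, ?_, ?_⟩⟩
  · rw [cfcmul _ _ (fun _ => 0) cr cγ, cfc_const_zero]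
    intro t
    rcases le_total t d with ht | ht
    · rw [γ0 t ht, mul_zero]
    · rw [max_eq_left ht, mul_inv_cancel₀ (by linarith), sub_self, zero_mul]
  · rw [cfc_sub _ _ h (by fun_prop) (by fun_prop), cfc_const_one ℝ h]
    congr 1
    conv_rhs => rw [← hid]
    rw [hid]
    nth_rewrite 2 [← hid]
    rw [cfcmul _ _ _ continuous_id' cinv (fun t => rfl)]
  · rw [cfcmul _ _ _ cγ ce]
    intro t
    rcases le_total t (2 * d) with ht | ht
    · rw [e0 t ht, mul_zero]
    · rw [γ1 t ht, one_mul]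
  · nth_rewrite 3 [← hid]
    rw [cfcmul _ _ _ csq csq (fun t => rfl), cfcmul _ _ _ css continuous_id' (fun t => rfl),
      cfcmul _ _ _ css' ce]
    intro t
    rcases le_total t (2 * d) with ht | ht
    · rw [e0 t ht, mul_zero]
    · have : max t d = t := max_eq_left (by linarith)
      rw [this, ← mul_inv, Real.mul_self_sqrt (by linarith), inv_mul_cancel₀ (by linarith), one_mul]
  · nth_rewrite 2 [← hid]
    rw [cfcmul _ _ _ continuous_id' cei]
    intro t
    rcases le_total t (2 * d) with ht | ht
    · rw [e0 t ht]; simp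
    · have : max t d = t := max_eq_left (by linarith)
      rw [this, mul_comm, mul_assoc, inv_mul_cancel₀ (by linarith), mul_one]
  · nth_rewrite 2 [← hid]
    rw [cfcmul _ _ _ continuous_id' cγi]
    intro t
    rcases le_total t d with ht | ht
    · rw [γ0 t ht]; simp
    · have : max t d = t := max_eq_left (by linarith)
      rw [this, mul_comm, mul_assoc, inv_mul_cancel₀ (by linarith), mul_one]
  · apply norm_cfc_le zero_le_one
    intro t _
    rw [Real.norm_of_nonneg (clp_nonneg _)]
    exact clp_le _
  · intro hpos
    have h1 : (1 : A) - cfc (fun t : ℝ => clp (t / d - 2)) h = cfc (fun t : ℝ => 1 - clp (t / d - 2)) h := by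
      rw [cfc_sub _ _ h (by fun_prop) ce.continuousOn, cfc_const_one ℝ h]
    rw [h1]
    have c1 : Continuous fun t : ℝ => 1 - clp (t / d - 2) := by fun_prop
    have c2 : Continuous fun t : ℝ => (1 - clp (t / d - 2)) * t := c1.mul continuous_id'
    nth_rewrite 2 [← hid]
    rw [cfcmul _ _ _ c1 continuous_id' (fun t => rfl),
      cfcmul _ _ _ c2 c1 (fun t => rfl)]
    apply norm_cfc_le hδ.le
    intro t ht
    have ht0 := hpos t ht
    rcases le_total (3 * d) t with h3 | h3
    · rw [e1 t h3]; simp; exact hδ.le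
    · have a1 := clp_nonneg (t / d - 2)
      have a2 := clp_le (t / d - 2)
      set x := clp (t / d - 2)
      rw [Real.norm_of_nonneg (mul_nonneg (mul_nonneg (by linarith) ht0) (by linarith))]
      have : (1 - x) * t ≤ t := by nlinarith
      have : (1 - x) * t * (1 - x) ≤ (1 - x) * t := by
        have : 0 ≤ (1 - x) * t := mul_nonneg (by linarith) ht0
        nlinarith
      linarith

namespace CF
variable {h : A} {δ : ℝ} (X : CF h δ)

lemma hr : Commute h X.r := (X.cr h (Commute.refl h)).symm
lemma hγ : Commute h X.γ := (X.cγ h (Commute.refl h)).symm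
lemma he : Commute h X.e := (X.ce h (Commute.refl h)).symm
lemma hm : Commute h X.m := (X.cm h (Commute.refl h)).symm
lemma hg : Commute h X.g := (X.cg h (Commute.refl h)).symm
lemma hg' : Commute h X.g' := (X.cg' h (Commute.refl h)).symm
lemma hgr : Commute h X.gr := (X.cgr h (Commute.refl h)).symm

lemma γr : X.γ * X.r = 0 := by
  rw [(X.cγ _ X.hr).eq, X.rγ]
lemma eγ : X.e * X.γ = X.e := by rw [(X.ce _ X.hγ).eq, X.γe]
lemma re : X.r * X.e = 0 := by rw [← X.γe, ← mul_assoc, X.rγ, zero_mul]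
lemma er : X.e * X.r = 0 := by rw [← X.eγ, mul_assoc, X.γr, mul_zero]
lemma eg' : X.e = X.g * h := by rw [X.eg, X.hg.eq]
lemma γg'' : X.γ = X.g' * h := by rw [X.γg, X.hg'.eq]

/-- annihilation -/
lemma e_mul {b : A} (hb : h * b = 0) : X.e * b = 0 := by rw [X.eg', mul_assoc, hb, mul_zero]
lemma mul_e {b : A} (hb : b * h = 0) : b * X.e = 0 := by rw [X.eg, ← mul_assoc, hb, zero_mul]
lemma γ_mul {b : A} (hb : h * b = 0) : X.γ * b = 0 := by rw [X.γg'', mul_assoc, hb, mul_zero]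
lemma mul_γ {b : A} (hb : b * h = 0) : b * X.γ = 0 := by rw [X.γg, ← mul_assoc, hb, zero_mul]
lemma mul_r {b : A} (hb : b * h = 0) : b * X.r = b := by
  rw [X.r1, mul_sub, ← mul_assoc, hb, zero_mul, mul_one, sub_zero]
lemma r_mul {b : A} (hb : h * b = 0) : X.r * b = b := by
  rw [X.r1, X.hgr.eq, sub_mul, mul_assoc, hb, mul_zero, one_mul, sub_zero]
end CF

lemma sq_small {z e h : A} (δ : ℝ) (hz : star z * z = h) (he : IsSelfAdjoint e)
    (hs : ‖(1 - e) * h * (1 - e)‖ ≤ δ ^ 2) (hδ : 0 ≤ δ) : ‖z - z * e‖ ≤ δ := by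
  have h1 : z - z * e = z * (1 - e) := by rw [mul_sub, mul_one]
  have h2 : ‖z - z * e‖ * ‖z - z * e‖ ≤ δ ^ 2 := by
    rw [← CStarRing.norm_star_mul_self, h1, star_mul, star_sub, star_one, he.star_eq]
    rw [← hz] at hs
    simpa [mul_assoc] using hs
  nlinarith [norm_nonneg (z - z * e)]

lemma exists_CFz (z : A) (δ : ℝ) (hδ : 0 < δ) :
    ∃ X : CF (star z * z) (δ ^ 2), ‖z - z * X.e‖ ≤ δ := by
  obtain ⟨X⟩ := exists_CF (star z * z) (IsSelfAdjoint.star_mul_self z) (δ ^ 2) (by positivity)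
  exact ⟨X, sq_small δ rfl X.se (X.small spectrum_star_mul_self_nonneg) hδ.le⟩

lemma exists_CFs (x : A) (δ : ℝ) (hδ : 0 < δ) :
    ∃ X : CF (x * star x) (δ ^ 2), ‖x - X.e * x‖ ≤ δ := by
  have := exists_CFz (star x) δ hδ
  rw [star_star] at this
  obtain ⟨X, hX⟩ := this
  refine ⟨X, ?_⟩
  rw [← norm_star]
  simpa only [star_sub, star_mul, X.se.star_eq] using hX

lemma mem_of_star_mul {J : TwoSidedIdeal A} (hJ : IsCoatom J) {x : A} (h : star x * x ∈ J) :
    x ∈ J := by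
  apply mem_of_approx hJ
  intro ε hε
  obtain ⟨X, hX⟩ := exists_CFz x (ε / 2) (by positivity)
  refine ⟨x * X.e, ?_, by linarith⟩
  rw [X.eg]
  exact J.mul_mem_left _ _ (J.mul_mem_right _ _ h)

lemma star_mem {J : TwoSidedIdeal A} (hJ : IsCoatom J) {x : A} (h : x ∈ J) : star x ∈ J := by
  apply mem_of_star_mul hJ
  rw [star_star]
  exact J.mul_mem_right _ _ h

lemma mem_of_mul_star {J : TwoSidedIdeal A} (hJ : IsCoatom J) {x : A} (h : x * star x ∈ J) :
    x ∈ J := by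
  have : star x ∈ J := by
    apply mem_of_star_mul hJ
    rwa [star_star]
  simpa using star_mem hJ this

lemma mem_of_sq {J : TwoSidedIdeal A} (hJ : IsCoatom J) {x : A} (hx : IsSelfAdjoint x)
    (h : x * x ∈ J) : x ∈ J := by
  apply mem_of_star_mul hJ
  rwa [hx.star_eq]

end GH


namespace GH
open Topology Filter
variable {A : Type*} [CStarAlgebra A]

lemma ev_unit {w : A} {F : A → A} (hF : ContinuousAt F w) (h1 : F w = 1) :
    ∀ᶠ v in 𝓝 w, IsUnit (F v) := by
  have : {x : A | IsUnit x} ∈ 𝓝 (F w) := Units.isOpen.mem_nhds (by rw [h1]; exact isUnit_one)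
  exact hF this

lemma inv_cont {w : A} {F : A → A} (hF : ContinuousAt F w) (h1 : F w = 1) :
    ContinuousAt (fun v => Ring.inverse (F v)) w := by
  have h2 : ContinuousAt (Ring.inverse : A → A) (F w) := by
    rw [h1]
    exact NormedRing.inverse_continuousAt (1 : Aˣ)
  exact ContinuousAt.comp (f := F) h2 hF

lemma invSqrt (v : A) (hv : IsUnit v) (f : A) (hf : star v * v * f = f) :
    ∃ u : A, star u * u = 1 ∧ u * star u = 1 ∧ u * f = v * f := by
  set h := star v * v with hh
  have hsa : IsSelfAdjoint h := IsSelfAdjoint.star_mul_self v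
  have hu : IsUnit h := (IsUnit.star hv).mul hv
  have h0 : ∀ t ∈ spectrum ℝ h, 0 < t := by
    intro t ht
    have h1 : 0 ≤ t := spectrum_star_mul_self_nonneg t ht
    refine lt_of_le_of_ne h1 ?_
    rintro rfl
    exact (spectrum.zero_notMem_iff ℝ).2 hu ht
  have c0 : ContinuousOn (fun t : ℝ => (√t)⁻¹) (spectrum ℝ h) :=
    ContinuousOn.inv₀ (by fun_prop) (fun t ht => (Real.sqrt_pos.2 (h0 t ht)).ne')
  have c1 : ContinuousOn (fun t : ℝ => -(√t * (1 + √t))⁻¹) (spectrum ℝ h) := by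
    apply ContinuousOn.neg
    refine ContinuousOn.inv₀ (by fun_prop) (fun t ht => ?_)
    have := Real.sqrt_pos.2 (h0 t ht)
    positivity
  set n := cfc (fun t : ℝ => (√t)⁻¹) h with hn
  have nsa : IsSelfAdjoint n := IsSelfAdjoint.cfc
  have hid : cfc (fun t : ℝ => t) h = h := cfc_id' ℝ h
  have nhn : n * h * n = 1 := by
    rw [hn]
    nth_rewrite 2 [← hid]
    have c2 : ContinuousOn (fun t : ℝ => (√t)⁻¹ * t) (spectrum ℝ h) := c0.mul continuousOn_id
    rw [← cfc_mul _ _ h c0 (by fun_prop), ← cfc_mul _ _ h c2 c0,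
      ← cfc_const_one ℝ h]
    apply cfc_congr
    intro t ht
    have := Real.sqrt_pos.2 (h0 t ht)
    have h2 : √t * √t = t := Real.mul_self_sqrt (h0 t ht).le
    simp only
    field_simp
    nlinarith
  have nf : n = 1 + cfc (fun t : ℝ => -(√t * (1 + √t))⁻¹) h * (h - 1) := by
    have : h - 1 = cfc (fun t : ℝ => t - 1) h := by
      rw [cfc_sub _ _ h (by fun_prop) (by fun_prop), hid, cfc_const_one ℝ h]
    have c3 : ContinuousOn (fun t : ℝ => -(√t * (1 + √t))⁻¹ * (t - 1)) (spectrum ℝ h) :=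
      c1.mul (by fun_prop)
    rw [this, ← cfc_mul _ _ h c1 (by fun_prop), hn, ← cfc_const_one ℝ h,
      ← cfc_add h (fun _ => 1) _ (by fun_prop) c3]
    apply cfc_congr
    intro t ht
    have := Real.sqrt_pos.2 (h0 t ht)
    have h2 : √t * √t = t := Real.mul_self_sqrt (h0 t ht).le
    simp only
    field_simp
    nlinarith
  have hnf : n * f = f := by
    rw [nf, add_mul, mul_assoc, sub_mul, hf, one_mul, sub_self, mul_zero, add_zero]
  have e1 : star (v * n) * (v * n) = 1 := by
    rw [star_mul, nsa.star_eq, ← nhn, hh]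
    simp only [mul_assoc]
  have nu : IsUnit n := by
    have hc : Commute h n := by
      rw [hn]; exact ((Commute.refl h).cfc_real _).symm
    refine ⟨⟨n, h * n, ?_, ?_⟩, rfl⟩
    · rw [← mul_assoc, nhn]
    · rw [hc.eq, nhn]
  refine ⟨v * n, e1, ?_, by rw [mul_assoc, hnf]⟩
  have hvn : IsUnit (v * n) := hv.mul nu
  obtain ⟨U, hU⟩ := hvn
  rw [← hU] at e1 ⊢
  have : star (U : A) = ↑U⁻¹ := by
    rw [← mul_one (star (U : A)), ← U.mul_inv, ← mul_assoc, e1, one_mul]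
  rw [this, U.mul_inv]

lemma lemU (hsr1 : Dense {a : A | IsUnit a}) {e w : A} (he : IsSelfAdjoint e)
    (hw : star w * w * e = e) :
    ∃ u : A, star u * u = 1 ∧ u * star u = 1 ∧ u * (e * e) = w * (e * e) := by
  have hw' : e * star w * w = e := by
    have := congrArg star hw
    simpa [he.star_eq, mul_assoc] using this
  let F : A → A := fun v => 1 + (v - w) * star w
  have hF : ContinuousAt F w := by fun_prop
  have F1 : F w = 1 := by simp [F]
  let V : A → A := fun v => Ring.inverse (F v) * v
  have hV : ContinuousAt V w := (inv_cont hF F1).mul continuousAt_id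
  have V1 : V w = w := by simp [V, F1]
  let G : A → A := fun v => 1 + star w * (V v - w)
  have hG : ContinuousAt G w := by
    apply ContinuousAt.add continuousAt_const
    apply ContinuousAt.mul continuousAt_const
    exact hV.sub continuousAt_const
  have G1 : G w = 1 := by simp [G, V1]
  obtain ⟨v0, hv0, hFu, hGu⟩ : ∃ v0, IsUnit v0 ∧ IsUnit (F v0) ∧ IsUnit (G v0) := by
    have := (ev_unit hF F1).and (ev_unit hG G1)
    obtain ⟨v, hv, hv'⟩ := hsr1.inter_nhds_nonempty this
    exact ⟨v, hv, hv'⟩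
  set v1 := V v0 with hv1
  have hv1u : IsUnit v1 := by
    rw [hv1]
    exact (IsUnit.ringInverse hFu).mul hv0
  have e1 : v1 * e = w * e := by
    have : F v0 * (w * e) = v0 * e := by
      simp only [F]
      rw [add_mul, one_mul, mul_assoc, ← mul_assoc (star w), hw, sub_mul]
      abel
    rw [hv1]
    simp only [V]
    rw [mul_assoc, ← this, ← mul_assoc, Ring.inverse_mul_cancel _ hFu, one_mul]
  set v2 := v1 * Ring.inverse (G v0) with hv2
  have hv2u : IsUnit v2 := hv1u.mul (IsUnit.ringInverse hGu)
  have e2 : v2 * e = w * e := by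
    have : G v0 * e = e := by
      simp only [G]
      rw [add_mul, one_mul, mul_assoc, sub_mul, ← hv1, e1, sub_self, mul_zero, add_zero]
    have h3 : Ring.inverse (G v0) * e = e := by
      nth_rewrite 1 [← this]
      rw [← mul_assoc, Ring.inverse_mul_cancel _ hGu, one_mul]
    rw [hv2, mul_assoc, h3, e1]
  set f := w * e * star w with hf
  have fsa : star f = f := by
    rw [hf]; simp [he.star_eq, mul_assoc]
  have fw : f * w = w * e := by
    rw [hf, mul_assoc, mul_assoc, ← mul_assoc e, hw']
  have f2 : f * v2 = f * w := by
    have h4 : f * v1 = f * w * G v0 := by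
      simp only [G]
      rw [fw, mul_add, mul_one, ← hv1, mul_sub, mul_sub, ← mul_assoc (w * e), ← mul_assoc (w * e), ← hf, fw]
      abel
    rw [hv2, ← mul_assoc, h4, mul_assoc, Ring.mul_inverse_cancel _ hGu, mul_one]
  have f2' : star v2 * f = star w * f := by
    have := congrArg star f2
    simpa [fsa] using this
  have key : star v2 * v2 * (e * e) = e * e := by
    rw [mul_assoc, ← mul_assoc v2, e2, ← fw, ← mul_assoc, ← mul_assoc, f2', mul_assoc (star w), fw,
      ← mul_assoc, hw]
  obtain ⟨u, u1, u2, u3⟩ := invSqrt v2 hv2u (e * e) key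
  refine ⟨u, u1, u2, ?_⟩
  rw [u3, ← mul_assoc, e2, mul_assoc]

lemma lemG (hsr1 : Dense {a : A | IsUnit a}) {e x : A} (hex : e * x = x) (y : A) {η ε : ℝ}
    (hη : 0 < η) (hε : 0 < ε) :
    ∃ D : A, ‖D‖ < η ∧ (∃ α β, D = e * α + y * β) ∧ (∃ σ, D = σ * x) ∧
      ∃ p q, ‖x - p * (y + D) * q‖ < ε := by
  obtain ⟨C, hC⟩ := exists_CFs x (ε / 2) (by positivity)
  have hE : ‖x - C.e * x‖ < ε := by linarith
  set s := C.m * C.m * x with hs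
  have sE : s * star x * C.e = C.e := by
    have := C.mm
    rw [hs]
    simpa only [mul_assoc] using this
  have eE : e * C.e = C.e := by
    rw [C.eg, ← mul_assoc, ← mul_assoc, hex]
  set X := y * star x + 1 - e with hX
  let R : A → A := fun w => 1 + (1 - e) * (w - X)
  have hR : ContinuousAt R X := by fun_prop
  have R1 : R X = 1 := by simp [R]
  let W : A → A := fun w => w * Ring.inverse (R w)
  have hW : ContinuousAt W X := continuousAt_id.mul (inv_cont hR R1)
  have W1 : W X = X := by simp [W, R1]
  let D : A → A := fun w => (W w - X) * s
  have hD : ContinuousAt D X := (hW.sub continuousAt_const).mul continuousAt_const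
  have D1 : D X = 0 := by simp [D, W1]
  obtain ⟨w, hw, hRu, hDn⟩ : ∃ w, IsUnit w ∧ IsUnit (R w) ∧ ‖D w‖ < η := by
    have h2 : ∀ᶠ w in 𝓝 X, ‖D w‖ < η := by
      have : ContinuousAt (fun w => ‖D w‖) X := hD.norm
      apply this.eventually_lt continuousAt_const
      rw [D1, norm_zero]; exact hη
    obtain ⟨v, hv, hv'⟩ := hsr1.inter_nhds_nonempty ((ev_unit hR R1).and h2)
    exact ⟨v, hv, hv'⟩
  have hWu : IsUnit (W w) := hw.mul (IsUnit.ringInverse hRu)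
  have WR : W w * R w = w := by
    simp only [W]; rw [mul_assoc, Ring.inverse_mul_cancel _ hRu, mul_one]
  set Q := Ring.inverse (R w) with hQ
  have RQ : R w * Q = 1 := Ring.mul_inverse_cancel _ hRu
  have D0 : W w - X = e * ((2 - e) * (w - X) * Q) + y * (-(star x * (1 - e) * (w - X) * Q)) := by
    have h5 : W w - X = (w - X * R w) * Q := by
      rw [sub_mul, mul_assoc, RQ, mul_one]
    have h6 : w - X * R w = e * ((2 - e) * (w - X)) + y * (-(star x * (1 - e) * (w - X))) := by
      have : w = X + (w - X) := by abel
      simp only [R]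
      generalize w - X = Δ at this ⊢
      rw [this, hX]
      have h2 : (2:A) = 1 + 1 := by norm_num
      rw [h2]
      noncomm_ring
    rw [h5, h6, add_mul]
    simp only [mul_assoc, neg_mul]
  refine ⟨D w, hDn, ⟨(2 - e) * (w - X) * Q * s, -(star x * (1 - e) * (w - X) * Q) * s, ?_⟩,
    ⟨(W w - X) * (C.m * C.m), ?_⟩, Ring.inverse (W w), star x * C.e * x, ?_⟩
  · simp only [D]
    rw [D0, add_mul]
    simp only [mul_assoc]
  · simp only [D, hs, mul_assoc]
  · have h7 : (y + D w) * (star x * C.e) = W w * C.e := by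
      have : D w * (star x * C.e) = (W w - X) * C.e := by
        simp only [D]
        rw [mul_assoc, ← mul_assoc s, sE]
      rw [add_mul, this, hX, sub_mul, sub_mul, add_mul, eE, one_mul]
      simp only [mul_assoc]
      abel
    have : Ring.inverse (W w) * (y + D w) * (star x * C.e * x) = C.e * x := by
      rw [mul_assoc, ← mul_assoc (y + D w), h7, mul_assoc, ← mul_assoc, Ring.inverse_mul_cancel _ hWu, one_mul]
    rw [this]
    exact hE

end GH


namespace GH
open Topology Filter
variable {A : Type*} [CStarAlgebra A]

lemma ev_close {x p q z : A} {ε : ℝ} (h : ‖x - p * z * q‖ < ε) :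
    ∀ᶠ z' in 𝓝 z, ‖x - p * z' * q‖ < ε := by
  have : ContinuousAt (fun z' : A => ‖x - p * z' * q‖) z := by fun_prop
  exact this.eventually_lt continuousAt_const h

lemma lemZ (hsr1 : Dense {a : A | IsUnit a}) {c r : A} (hc : Full c) (hr : Full r) :
    ∃ z, Full z ∧ (∃ a, z = c * a) ∧ (∃ b, z = b * r) := by
  classical
  let ι : Type _ := {x : A // (∃ a, x = c * a) ∧ (∃ b, x = b * r) ∧ ∃ e, (∃ a, e = c * a) ∧ e * x = x}
  obtain ⟨F, ε, hε, hF⟩ := compact (fun x : ι => x.1) (by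
    intro J hJ
    obtain ⟨t, ht⟩ := prime hJ (hc J hJ) (hr J hJ)
    obtain ⟨ε, hε, h⟩ := notMem.open hJ ht
    obtain ⟨X, hX⟩ := exists_CFs (c * t * r) (ε / 2) (by positivity)
    have hlt : ‖c * t * r - X.e * (c * t * r)‖ < ε := by linarith
    refine ⟨⟨X.e * (c * t * r), ⟨?_, ?_, X.γ, ?_, ?_⟩⟩, h _ hlt⟩
    · rw [X.eg]
      simp only [mul_assoc]
      exact ⟨_, rfl⟩
    · simp only [← mul_assoc]
      exact ⟨_, rfl⟩
    · rw [X.γg]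
      simp only [mul_assoc]
      exact ⟨_, rfl⟩
    · rw [← mul_assoc, X.γe])
  have key : ∀ G : Finset ι, ∃ z, (∃ a, z = c * a) ∧ (∃ b, z = b * r) ∧
      ∀ x ∈ G, ∃ p q, ‖x.1 - p * z * q‖ < ε := by
    intro G
    induction G using Finset.induction_on with
    | empty => exact ⟨0, ⟨0, by simp⟩, ⟨0, by simp⟩, by simp⟩
    | insert x G hx ih =>
      obtain ⟨z, ⟨a, ha⟩, ⟨b, hb⟩, hz⟩ := ih
      have ev : ∀ᶠ z' in 𝓝 z, ∀ x ∈ G, ∃ p q, ‖x.1 - p * z' * q‖ < ε := by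
        rw [Filter.eventually_all_finset]
        intro x hx
        obtain ⟨p, q, h⟩ := hz x hx
        filter_upwards [ev_close h] with z' h'
        exact ⟨p, q, h'⟩
      obtain ⟨η, hη, hball⟩ := Metric.eventually_nhds_iff.1 ev
      obtain ⟨-, ⟨b', hb'⟩, e, ⟨a', ha'⟩, hex⟩ := x.2
      obtain ⟨D, hD, ⟨α, β, hD1⟩, ⟨σ, hD2⟩, p, q, hpq⟩ := lemG hsr1 hex z hη hε
      refine ⟨z + D, ⟨a + a' * α + a * β, ?_⟩, ⟨b + σ * b', ?_⟩, ?_⟩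
      · rw [hD1, ha', ha]
        simp only [mul_add, mul_assoc, add_assoc]
      · rw [hD2, add_mul, ← hb, mul_assoc, ← hb']
      · intro x' hx'
        rcases Finset.mem_insert.1 hx' with rfl | hx'
        · exact ⟨p, q, hpq⟩
        · refine hball ?_ x' hx'
          rw [dist_eq_norm, add_sub_cancel_left]
          exact hD
  obtain ⟨z, h1, h2, h3⟩ := key F
  refine ⟨z, ?_, h1, h2⟩
  intro J hJ hz
  obtain ⟨i, hi, hi'⟩ := hF J hJ
  obtain ⟨p, q, hpq⟩ := h3 i hi
  have := hi' (p * z * q) (J.mul_mem_right _ _ (J.mul_mem_left _ _ hz))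
  linarith

lemma Full.cube {e : A} (he : IsSelfAdjoint e) {J : TwoSidedIdeal A} (hJ : IsCoatom J)
    (h : e * e * e ∈ J) : e ∈ J := by
  apply mem_of_sq hJ he
  apply mem_of_sq hJ
  · rw [IsSelfAdjoint, star_mul, he.star_eq]
  · have := J.mul_mem_left e _ h
    simpa [mul_assoc] using this

lemma lemV (hsr1 : Dense {a : A | IsUnit a}) {γ e' c r : A} (hγ : IsSelfAdjoint γ)
    (he' : IsSelfAdjoint e') (hγe : γ * e' = e') (sc : IsSelfAdjoint c) (sr : IsSelfAdjoint r)
    (fc : Full c) (fr : Full r) (hγc : γ * c = 0) (hγr : γ * r = 0) :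
    ∃ u c1 : A, star u * u = 1 ∧ u * star u = 1 ∧ IsSelfAdjoint c1 ∧ Full c1 ∧
      (∃ α, c1 = c * α) ∧ u * (e' * e' * e') = e' * e' * e' ∧ ∃ β, star u * c1 * u = r * β := by
  obtain ⟨z, fz, ⟨a, hza⟩, ⟨b, hzb⟩⟩ := lemZ hsr1 fc fr
  obtain ⟨ε, hε, hopen⟩ := fz.open
  obtain ⟨X, hX⟩ := exists_CFz z (ε / 2) (by positivity)
  have fze : Full (z * X.e) := hopen _ (by linarith)
  set e := X.e with he
  set m := X.m with hm
  have hrγ : r * γ = 0 := by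
    have := congrArg star hγr
    simpa [sr.star_eq, hγ.star_eq] using this
  have heγ : e' * γ = e' := by
    have := congrArg star hγe
    simpa [he'.star_eq, hγ.star_eq] using this
  have γz : γ * z = 0 := by rw [hza, ← mul_assoc, hγc, zero_mul]
  have zγ : z * γ = 0 := by rw [hzb, mul_assoc, hrγ, mul_zero]
  have zsγ : star z * γ = 0 := by
    have := congrArg star γz
    simpa [hγ.star_eq] using this
  have γzs : γ * star z = 0 := by
    have := congrArg star zγ
    simpa [hγ.star_eq] using this
  have h1 : star z * z * γ = 0 := by rw [mul_assoc, zγ, mul_zero]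
  have h2 : γ * (star z * z) = 0 := by rw [← mul_assoc, γzs, zero_mul]
  have hcom : Commute (star z * z) γ := by rw [Commute, SemiconjBy, h1, h2]
  have mγ : m * γ = γ * m := (X.cm γ hcom).eq
  have eγ : e * γ = 0 := X.e_mul h1
  have γe : γ * e = 0 := X.mul_e h2
  have ee' : e * e' = 0 := by rw [← hγe, ← mul_assoc, eγ, zero_mul]
  have e'e : e' * e = 0 := by rw [← heγ, mul_assoc, γe, mul_zero]
  have zme' : z * m * e' = 0 := by
    rw [← hγe, mul_assoc, ← mul_assoc m, mγ, mul_assoc, ← mul_assoc, zγ, zero_mul]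
  set W := z * m + γ with hW
  have sW : star W = m * star z + γ := by
    rw [hW, star_add, star_mul, hγ.star_eq, hm, X.sm.star_eq]
  have We : W * e = z * m * e := by rw [hW, add_mul, γe, add_zero]
  have We' : W * e' = e' := by rw [hW, add_mul, zme', hγe, zero_add]
  have mm : m * star z * (z * m * e) = e := by
    have h3 := X.mm
    have h4 := X.hm.eq
    rw [← hm, ← he] at h3
    rw [← hm] at h4
    calc m * star z * (z * m * e) = m * (star z * z * m) * e := by simp only [mul_assoc]
      _ = m * m * (star z * z) * e := by rw [h4]; simp only [mul_assoc]
      _ = e := h3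
  have key : star W * W * (e + e') = e + e' := by
    rw [mul_assoc, mul_add, We, We', sW, add_mul, mul_add, mm, mul_add, hγe]
    have t1 : m * star z * e' = 0 := by
      rw [← hγe, mul_assoc, ← mul_assoc (star z), zsγ, zero_mul, mul_zero]
    have t2 : γ * (z * m * e) = 0 := by simp only [← mul_assoc]; rw [γz]; simp
    rw [t1, t2]; simp
  obtain ⟨u, u1, u2, hu⟩ := lemU hsr1 (X.se.add he') key
  have sq : (e + e') * (e + e') = e * e + e' * e' := by
    rw [add_mul, mul_add, mul_add, ee', e'e]; simp
  rw [sq] at hu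
  have ue : u * (e * e * e) = z * (m * (e * e * e)) := by
    have := congrArg (· * e) hu
    simp only [mul_assoc, add_mul, e'e, mul_zero, add_zero] at this
    simp only [mul_assoc]
    rw [this, ← mul_assoc W, We]
    simp only [mul_assoc]
  have ue' : u * (e' * e' * e') = e' * e' * e' := by
    have := congrArg (· * e') hu
    simp only [mul_assoc, add_mul, ee', mul_zero, zero_add] at this
    simp only [mul_assoc]
    rw [this, ← mul_assoc W, We']
  have sf : star (e * e * e) = e * e * e := by
    rw [he]; simp only [star_mul, X.se.star_eq, mul_assoc]
  refine ⟨u, (u * (e * e * e)) * star (u * (e * e * e)), u1, u2, IsSelfAdjoint.mul_star_self _,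
    ?_, ?_, ue', ?_⟩
  · intro J hJ h
    have h3 := J.mul_mem_left (star u) _ (mem_of_mul_star hJ h)
    rw [← mul_assoc, u1, one_mul] at h3
    exact fze J hJ (J.mul_mem_left _ _ (Full.cube X.se hJ h3))
  · rw [ue, hza]
    simp only [mul_assoc]
    exact ⟨_, rfl⟩
  · rw [star_mul, sf]
    refine ⟨star b * z * X.g * (e * e) * (e * e * e), ?_⟩
    calc star u * (u * (e * e * e) * (e * e * e * star u)) * u
        = (star u * u) * (e * e * e) * (e * e * e) * (star u * u) := by simp only [mul_assoc]
      _ = e * (e * e) * (e * e * e) := by rw [u1]; simp only [mul_assoc, one_mul, mul_one]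
      _ = _ := by
        nth_rewrite 1 [he]
        rw [X.eg]
        have : star z = r * star b := by rw [hzb, star_mul, sr.star_eq]
        generalize X.g = gg
        rw [this]
        simp only [mul_assoc]

lemma lemP (hsr1 : Dense {a : A | IsUnit a}) {ι : Type*} (F : Finset ι) {γ e' c0 : A} (r : ι → A)
    (hγ : IsSelfAdjoint γ)
    (he' : IsSelfAdjoint e') (hγe : γ * e' = e') (sc : IsSelfAdjoint c0)
    (sr : ∀ i ∈ F, IsSelfAdjoint (r i))
    (fc : Full c0) (fr : ∀ i ∈ F, Full (r i)) (hγc : γ * c0 = 0) (hγr : ∀ i ∈ F, γ * r i = 0) :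
    ∃ c : A, IsSelfAdjoint c ∧ Full c ∧ (∃ α, c = c0 * α) ∧ ∀ i ∈ F, ∃ u : A,
      star u * u = 1 ∧ u * star u = 1 ∧ u * (e' * e' * e') = e' * e' * e' ∧
        ∃ β, star u * c * u = r i * β := by
  classical
  induction F using Finset.induction_on with
  | empty => exact ⟨c0, sc, fc, ⟨1, by simp⟩, by simp⟩
  | insert i F hi ih =>
    obtain ⟨c, s, f, ⟨α, hα⟩, h⟩ := ih (fun j hj => sr j (Finset.mem_insert_of_mem hj))
      (fun j hj => fr j (Finset.mem_insert_of_mem hj))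
      (fun j hj => hγr j (Finset.mem_insert_of_mem hj))
    have hi' := Finset.mem_insert_self i F
    obtain ⟨u, c1, u1, u2, s1, f1, ⟨α', hα'⟩, hu, hβ⟩ := lemV hsr1 hγ he' hγe s (sr i hi') f (fr i hi')
      (by rw [hα, ← mul_assoc, hγc, zero_mul]) (hγr i hi')
    refine ⟨c1, s1, f1, ⟨α * α', by rw [hα', hα, mul_assoc]⟩, ?_⟩
    intro j hj
    rcases Finset.mem_insert.1 hj with rfl | hj
    · exact ⟨u, u1, u2, hu, hβ⟩
    · obtain ⟨v, v1, v2, hv, β, hβ⟩ := h j hj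
      refine ⟨v, v1, v2, hv, β * (star v * α' * v), ?_⟩
      rw [← mul_assoc, ← hβ, hα']
      calc star v * (c * α') * v = star v * c * (1 * (α' * v)) := by simp only [mul_assoc, one_mul]
        _ = _ := by rw [← v2]; simp only [mul_assoc]

end GH


namespace GH
open Topology Filter
variable {A : Type*} [CStarAlgebra A]

def OrthFam (J : TwoSidedIdeal A) (m : ℕ) : Prop :=
  ∃ a : Fin m → A, (∀ i, IsSelfAdjoint (a i)) ∧ (∀ i j, i ≠ j → a i * a j = 0) ∧ ∀ i, a i ∉ J

lemma smul_mem' {J : TwoSidedIdeal A} (c : ℂ) {x : A} (h : x ∈ J) : c • x ∈ J := by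
  have := J.mul_mem_left (c • 1) _ h
  simpa using this

lemma exists_quot.{u} {A : Type u} [CStarAlgebra A] (J : TwoSidedIdeal A) : ∃ (Q : Type u) (_ : Ring Q) (_ : Algebra ℂ Q)
    (π : A →ₐ[ℂ] Q), ∀ x, π x = 0 ↔ x ∈ J := by
  refine ⟨J.ringCon.Quotient, inferInstance, inferInstance, 
    { J.ringCon.mk' with commutes' := fun r => rfl }, ?_⟩
  intro x
  have : (J.ringCon.mk' x = 0) ↔ J.ringCon x 0 := by
    rw [← map_zero J.ringCon.mk']
    exact RingCon.eq _
  rw [TwoSidedIdeal.mem_iff, ← this]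
  rfl

lemma star_orth {a b : A} (ha : IsSelfAdjoint a) (hb : IsSelfAdjoint b) (h : a * b = 0) :
    b * a = 0 := by
  have := congrArg star h
  simpa [ha.star_eq, hb.star_eq] using this

lemma two {J : TwoSidedIdeal A} {m : ℕ} (hN : ¬ OrthFam J (m + 1)) {a : Fin m → A}
    (sa : ∀ i, IsSelfAdjoint (a i)) (oa : ∀ i j, i ≠ j → a i * a j = 0) (na : ∀ i, a i ∉ J)
    (i : Fin m) {x y : A} (sx : IsSelfAdjoint x) (sy : IsSelfAdjoint y) (hxy : x * y = 0)
    (hx : ∀ l, l ≠ i → x * a l = 0) (hy : ∀ l, l ≠ i → y * a l = 0) : x ∈ J ∨ y ∈ J := by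
  by_contra! hcon
  apply hN
  have sup : ∀ j, IsSelfAdjoint (Function.update a i x j) := by
    intro j
    by_cases h : j = i
    · subst h; simpa using sx
    · simpa [Function.update_of_ne h] using sa j
  have yu : ∀ j, y * Function.update a i x j = 0 := by
    intro j
    by_cases h : j = i
    · subst h; simpa using star_orth sx sy hxy
    · simpa [Function.update_of_ne h] using hy j h
  refine ⟨Fin.cons y (Function.update a i x), ?_, ?_, ?_⟩
  · intro j
    refine Fin.cases ?_ ?_ j
    · simpa using sy
    · intro j; simpa using sup j
  · intro j l
    refine Fin.cases ?_ ?_ j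
    · refine Fin.cases ?_ ?_ l
      · simp
      · intro l _; simpa using yu l
    · intro j
      refine Fin.cases ?_ ?_ l
      · intro _; simpa using star_orth sy (sup j) (yu j)
      · intro l hjl
        have hjl' : j ≠ l := by rintro rfl; exact hjl rfl
        simp only [Fin.cons_succ]
        by_cases h : j = i
        · subst h
          rw [Function.update_self, Function.update_of_ne hjl'.symm]
          exact hx l hjl'.symm
        · rw [Function.update_of_ne h]
          by_cases h2 : l = i
          · subst h2
            rw [Function.update_self]
            exact star_orth sx (sa j) (hx j h)
          · rw [Function.update_of_ne h2]
            exact oa j l hjl'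
  · intro j
    refine Fin.cases ?_ ?_ j
    · simpa using hcon.2
    · intro j
      simp only [Fin.cons_succ]
      by_cases h : j = i
      · subst h; simpa using hcon.1
      · rw [Function.update_of_ne h]; exact na j

lemma claim1 {J : TwoSidedIdeal A} (hJ : IsCoatom J) {m : ℕ} (hN : ¬ OrthFam J (m + 1))
    {a : Fin m → A}
    (sa : ∀ i, IsSelfAdjoint (a i)) (oa : ∀ i j, i ≠ j → a i * a j = 0) (na : ∀ i, a i ∉ J)
    (i : Fin m) {b : A} (sb : IsSelfAdjoint b) (hb : ∀ l, l ≠ i → b * a l = 0) :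
    ∃ t : ℝ, b * b - (t : ℂ) • b ∈ J := by
  have hid : cfc (fun t : ℝ => t) b = b := cfc_id' ℝ b
  let P : ℝ → A := fun t => b * cfc (fun s : ℝ => max (s - t) 0) b
  let N : ℝ → A := fun t => b * cfc (fun s : ℝ => max (t - s) 0) b
  have cP : Continuous P := by
    have : LipschitzWith ⟨‖b‖, norm_nonneg b⟩ P := by
      apply LipschitzWith.of_dist_le_mul
      intro x y
      simp only [P, dist_eq_norm]
      rw [← mul_sub, ← cfc_sub _ _ b (by fun_prop) (by fun_prop)]
      refine (norm_mul_le _ _).trans ?_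
      apply mul_le_mul_of_nonneg_left _ (norm_nonneg b)
      apply norm_cfc_le (norm_nonneg _)
      intro s _
      simp only [Real.norm_eq_abs]
      refine (abs_max_sub_max_le_abs _ _ _).trans ?_
      rw [abs_sub_comm x y]
      apply le_of_eq
      congr 1; ring
    exact this.continuous
  have cN : Continuous N := by
    have : LipschitzWith ⟨‖b‖, norm_nonneg b⟩ N := by
      apply LipschitzWith.of_dist_le_mul
      intro x y
      simp only [N, dist_eq_norm]
      rw [← mul_sub, ← cfc_sub _ _ b (by fun_prop) (by fun_prop)]
      refine (norm_mul_le _ _).trans ?_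
      apply mul_le_mul_of_nonneg_left _ (norm_nonneg b)
      apply norm_cfc_le (norm_nonneg _)
      intro s _
      simp only [Real.norm_eq_abs]
      refine (abs_max_sub_max_le_abs _ _ _).trans ?_
      apply le_of_eq
      congr 1; ring
    exact this.continuous
  have comm : ∀ f : ℝ → ℝ, Commute b (cfc f b) := fun f => ((Commute.refl b).cfc_real f).symm
  have sP : ∀ f : ℝ → ℝ, IsSelfAdjoint (b * cfc f b) := by
    intro f
    rw [IsSelfAdjoint, star_mul, sb.star_eq, (IsSelfAdjoint.cfc (f := f) (a := b)).star_eq, (comm f).eq]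
  have aP : ∀ f : ℝ → ℝ, ∀ l, l ≠ i → (b * cfc f b) * a l = 0 := by
    intro f l hl
    rw [(comm f).eq, mul_assoc, hb l hl, mul_zero]
  have hbd : ∀ s ∈ spectrum ℝ b, |s| ≤ ‖b‖ * ‖(1:A)‖ := fun s hs => spectrum.norm_le_norm_mul_of_mem hs
  have hcov : ∀ t, P t ∈ J ∨ N t ∈ J := by
    intro t
    apply two hN sa oa na i (sP _) (sP _) _ (aP _) (aP _)
    have : cfc (fun s : ℝ => max (s - t) 0) b * cfc (fun s : ℝ => max (t - s) 0) b = 0 := by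
      rw [cfcmul _ _ (fun _ => 0) (by fun_prop) (by fun_prop), cfc_const_zero]
      intro s
      rcases le_total s t with h | h
      · rw [max_eq_right (by linarith), zero_mul]
      · rw [max_eq_right (a := t - s) (by linarith), mul_zero]
    rw [mul_assoc, ← mul_assoc _ b, ← (comm _).eq, mul_assoc b, this]; simp
  have hT := (isPreconnected_closed_iff (s := (Set.univ : Set ℝ))).1 isPreconnected_univ
    (P ⁻¹' (J : Set A)) (N ⁻¹' (J : Set A)) ((coatom_closed hJ).preimage cP) ((coatom_closed hJ).preimage cN)
    (fun t _ => hcov t)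
    ⟨‖b‖ * ‖(1:A)‖, trivial, by
      have : P (‖b‖ * ‖(1:A)‖) = 0 := by
        simp only [P]
        have : cfc (fun s : ℝ => max (s - ‖b‖ * ‖(1:A)‖) 0) b = cfc (fun s : ℝ => (0:ℝ)) b := by
          apply cfc_congr
          intro s hs
          have := (abs_le.1 (hbd s hs)).2
          exact max_eq_right (by linarith)
        rw [this, cfc_const_zero, mul_zero]
      simp only [Set.mem_preimage, this]
      exact J.zero_mem⟩
    ⟨-(‖b‖ * ‖(1:A)‖), trivial, by
      have : N (-(‖b‖ * ‖(1:A)‖)) = 0 := by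
        simp only [N]
        have : cfc (fun s : ℝ => max (-(‖b‖ * ‖(1:A)‖) - s) 0) b = cfc (fun s : ℝ => (0:ℝ)) b := by
          apply cfc_congr
          intro s hs
          have := (abs_le.1 (hbd s hs)).1
          exact max_eq_right (by linarith)
        rw [this, cfc_const_zero, mul_zero]
      simp only [Set.mem_preimage, this]
      exact J.zero_mem⟩
  obtain ⟨t, -, h1, h2⟩ := hT
  refine ⟨t, ?_⟩
  have h3 := J.sub_mem h1 h2
  simp only [P, N] at h3
  rw [← mul_sub, ← cfc_sub _ _ b (by fun_prop) (by fun_prop)] at h3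
  have h4 : cfc (fun s : ℝ => max (s - t) 0 - max (t - s) 0) b = b - (t : ℂ) • 1 := by
    have : (fun s : ℝ => max (s - t) 0 - max (t - s) 0) = fun s => s - t := by
      funext s
      rcases le_total s t with h | h
      · rw [max_eq_right (by linarith), max_eq_left (a := t - s) (by linarith)]; ring
      · rw [max_eq_right (a := t - s) (by linarith), max_eq_left (by linarith)]; ring
    rw [this, cfc_sub _ _ b (by fun_prop) (by fun_prop), hid, cfc_const t b]
    congr 1
    rw [Algebra.algebraMap_eq_smul_one]
    simp
  rw [h4] at h3
  simpa [mul_sub] using h3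

end GH


namespace GH
open Topology Filter
variable {A : Type*} [CStarAlgebra A]

lemma sa_real_smul {a : A} (ha : IsSelfAdjoint a) (t : ℝ) : IsSelfAdjoint ((t : ℂ) • a) := by
  rw [IsSelfAdjoint, star_smul, ha.star_eq]; simp

lemma base_proj {J : TwoSidedIdeal A} (hJ : IsCoatom J) {m : ℕ} (hN : ¬ OrthFam J (m + 1))
    (hO : OrthFam J m) :
    ∃ p : Fin m → A, (∀ i, IsSelfAdjoint (p i)) ∧ (∀ i j, i ≠ j → p i * p j = 0) ∧ (∀ i, p i ∉ J) ∧
      ∀ i, p i * p i - p i ∈ J := by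
  obtain ⟨a, sa, oa, na⟩ := hO
  have h := fun i => claim1 hJ hN sa oa na i (sa i) (fun l hl => oa i l hl.symm)
  choose t ht using h
  have ht0 : ∀ i, t i ≠ 0 := by
    intro i h0
    have := ht i
    rw [h0] at this
    apply na i
    apply mem_of_sq hJ (sa i)
    simpa using this
  refine ⟨fun i => ((t i)⁻¹ : ℝ) • a i, ?_, ?_, ?_, ?_⟩
  · intro i
    exact (IsSelfAdjoint.all _).smul (sa i)
  · intro i j hij
    simp [oa i j hij]
  · intro i hi
    apply na i
    have := smul_mem' (t i : ℂ) hi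
    simpa [ht0 i] using this
  · intro i
    have := smul_mem' (((t i)⁻¹ * (t i)⁻¹ : ℝ) : ℂ) (ht i)
    rw [smul_sub, smul_smul] at this
    have e : ((((t i)⁻¹ * (t i)⁻¹ : ℝ) : ℂ) * (t i : ℂ)) = (((t i)⁻¹ : ℝ) : ℂ) := by
      rw [← Complex.ofReal_mul]; congr 1; field_simp [ht0 i]
    rw [e, Complex.coe_smul, Complex.coe_smul] at this
    simpa [smul_smul] using this

lemma scal_real {J : TwoSidedIdeal A} (hJ : IsCoatom J) {m : ℕ} (hN : ¬ OrthFam J (m + 1))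
    {p : Fin m → A} (sp : ∀ i, IsSelfAdjoint (p i)) (op : ∀ i j, i ≠ j → p i * p j = 0)
    (np : ∀ i, p i ∉ J) (pp : ∀ i, p i * p i - p i ∈ J) (i : Fin m) {b : A}
    (sb : IsSelfAdjoint b) : ∃ t : ℝ, p i * b * p i - (t : ℂ) • p i ∈ J := by
  obtain ⟨Q, _, _, π, hπ⟩ := exists_quot J
  have sb' : IsSelfAdjoint (p i * b * p i) := by
    rw [IsSelfAdjoint, star_mul, star_mul, (sp i).star_eq, sb.star_eq, mul_assoc]
  have hb' : ∀ l, l ≠ i → p i * b * p i * p l = 0 := by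
    intro l hl; rw [mul_assoc, op i l hl.symm, mul_zero]
  have hP : π (p i) * π (p i) = π (p i) := by
    have := (hπ _).2 (pp i)
    rw [map_sub, map_mul, sub_eq_zero] at this
    exact this
  obtain ⟨μ, hμ⟩ := claim1 hJ hN sp op np i sb' hb'
  by_cases hB : p i * b * p i ∈ J
  · exact ⟨0, by simpa using hB⟩
  have hμ0 : μ ≠ 0 := by
    rintro rfl
    apply hB
    apply mem_of_sq hJ sb'
    simpa using hμ
  have hμc : (μ : ℂ) ≠ 0 := by exact_mod_cast hμ0
  obtain ⟨l, hl⟩ := claim1 hJ hN sp op np i (b := p i + ((μ⁻¹ : ℝ) : ℂ) • (p i * b * p i))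
    ((sp i).add (sa_real_smul sb' _)) (fun l hl => by
      rw [add_mul, smul_mul_assoc, hb' l hl, op i l hl.symm]; simp)
  rw [← hπ] at hμ hl hB
  have hPB : π (p i) * π (p i * b * p i) = π (p i * b * p i) := by
    rw [map_mul, map_mul, mul_assoc, ← mul_assoc, hP]
  have hBP : π (p i * b * p i) * π (p i) = π (p i * b * p i) := by
    rw [map_mul, map_mul, mul_assoc, hP]
  refine ⟨μ, ?_⟩
  rw [← hπ]
  simp only [map_sub, map_smul, map_add] at hμ hl ⊢
  rw [map_mul] at hμ hl
  simp only [map_add, map_smul] at hl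
  generalize π (p i) = P at *
  generalize π (p i * b * p i) = B at *
  obtain ⟨q, rfl⟩ : ∃ q, B = (μ : ℂ) • q := ⟨(μ : ℂ)⁻¹ • B, by rw [smul_smul, mul_inv_cancel₀ hμc, one_smul]⟩
  have inj : ∀ {x y : Q}, (μ : ℂ) • x = (μ : ℂ) • y → x = y := by
    intro x y h
    have := congrArg (fun z => (μ : ℂ)⁻¹ • z) h
    simpa only [smul_smul, inv_mul_cancel₀ hμc, one_smul] using this
  have hPq : P * q = q := inj (by rw [← mul_smul_comm, hPB])
  have hqP : q * P = q := inj (by rw [← smul_mul_assoc, hBP])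
  have hqq : q * q = q := by
    rw [sub_eq_zero, smul_mul_smul_comm, ← smul_smul] at hμ
    exact inj (inj hμ)
  have hq0 : q ≠ 0 := by rintro rfl; simp at hB
  have e1 : (((μ⁻¹ : ℝ) : ℂ) • (μ : ℂ) • q) = q := by
    rw [smul_smul, Complex.ofReal_inv, inv_mul_cancel₀ hμc, one_smul]
  rw [e1, sub_eq_zero] at hl
  have hl2 := congrArg (fun z => z * q) hl
  simp only [add_mul, mul_add, hP, hPq, hqP, hqq, smul_mul_assoc] at hl hl2
  have h4 : ((4:ℂ) - 2 * (l:ℂ)) • q = 0 := by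
    have : q + q + (q + q) - (l : ℂ) • (q + q) = 0 := by rw [hl2]; simp
    rw [← this]; module
  rcases smul_eq_zero.1 h4 with h | h
  · have h5 : (l : ℂ) = 2 := by linear_combination (-1/2) * h
    rw [h5] at hl
    have : q - P = (P + q + (q + q)) - (2:ℂ) • (P + q) := by module
    rw [hl, sub_self] at this
    rw [← smul_sub, this, smul_zero]
  · exact absurd h hq0

lemma scal {J : TwoSidedIdeal A} (hJ : IsCoatom J) {m : ℕ} (hN : ¬ OrthFam J (m + 1))
    {p : Fin m → A} (sp : ∀ i, IsSelfAdjoint (p i)) (op : ∀ i j, i ≠ j → p i * p j = 0)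
    (np : ∀ i, p i ∉ J) (pp : ∀ i, p i * p i - p i ∈ J) (i : Fin m) (b : A) :
    ∃ t : ℂ, p i * b * p i - t • p i ∈ J := by
  obtain ⟨t, ht⟩ := scal_real hJ hN sp op np pp i (realPart b).2
  obtain ⟨s, hs⟩ := scal_real hJ hN sp op np pp i (imaginaryPart b).2
  refine ⟨t + s * Complex.I, ?_⟩
  have := J.add_mem ht (smul_mem' Complex.I hs)
  convert this using 1
  conv_lhs => rw [← realPart_add_I_smul_imaginaryPart b]
  simp only [mul_add, add_mul, mul_smul_comm, smul_mul_assoc, smul_sub]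
  module

lemma sum_one {J : TwoSidedIdeal A} {m : ℕ} (hN : ¬ OrthFam J (m + 1))
    {p : Fin m → A} (sp : ∀ i, IsSelfAdjoint (p i)) (op : ∀ i j, i ≠ j → p i * p j = 0)
    (np : ∀ i, p i ∉ J) (pp : ∀ i, p i * p i - p i ∈ J) : 1 - ∑ i, p i ∈ J := by
  obtain ⟨s, hs⟩ : ∃ s, s = ∑ i, p i := ⟨_, rfl⟩
  have ss : IsSelfAdjoint s := by
    rw [hs, IsSelfAdjoint, star_sum]
    exact Finset.sum_congr rfl fun i _ => (sp i).star_eq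
  have ps : ∀ i, p i * s = p i * p i := by
    intro i
    rw [hs, Finset.mul_sum]
    exact Finset.sum_eq_single i (fun j _ h => op i j h.symm) (by simp)
  have spp : ∀ i, s * p i = p i * p i := by
    intro i
    rw [hs, Finset.sum_mul]
    exact Finset.sum_eq_single i (fun j _ h => op j i h) (by simp)
  have cm : ∀ i, Commute s (p i) := fun i => by rw [Commute, SemiconjBy, ps, spp]
  have hss : s * s - s ∈ J := by
    have : s * s - s = ∑ i, (p i * p i - p i) := by
      rw [Finset.sum_sub_distrib, ← hs]
      congr 1
      conv_lhs => rw [hs, Finset.sum_mul, ← hs]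
      exact Finset.sum_congr rfl fun i _ => ps i
    rw [this]
    exact sum_mem fun i _ => pp i
  rw [← hs]
  have hid : cfc (fun t : ℝ => t) s = s := cfc_id' ℝ s
  have h1d : cfc (fun t : ℝ => (1:ℝ)) s = 1 := cfc_const_one ℝ s
  set yp := cfc (fun t : ℝ => max (t - 1/2) 0) s with hyp
  set ym := cfc (fun t : ℝ => max (1/2 - t) 0) s with hym
  have syp : IsSelfAdjoint yp := IsSelfAdjoint.cfc
  have sym : IsSelfAdjoint ym := IsSelfAdjoint.cfc
  have cyp : ∀ i, Commute yp (p i) := fun i => (cm i).cfc_real _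
  have cg : Continuous fun t : ℝ => (1 / (2 * (1 - min t (1/2))) : ℝ) := by
    apply Continuous.div (by fun_prop) (by fun_prop)
    intro t
    have := min_le_right t (1/2 : ℝ)
    intro h; linarith
  have hyy : yp * ym = 0 := by
    rw [hyp, hym, cfcmul _ _ (fun _ => 0) (by fun_prop) (by fun_prop), cfc_const_zero]
    intro t
    rcases le_total t (1/2) with h | h
    · rw [max_eq_right (by linarith), zero_mul]
    · rw [max_eq_right (a := 1/2 - t) (by linarith), mul_zero]
  have key1 : yp - (1/2 : ℝ) • (1:A) = (s - 1) * cfc (fun t : ℝ => (1 / (2 * (1 - min t (1/2))) : ℝ)) s := by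
    have e1 : s - 1 = cfc (fun t : ℝ => t - 1) s := by
      rw [cfc_sub _ _ s (by fun_prop) (by fun_prop), hid, h1d]
    have e2 : (1/2 : ℝ) • (1:A) = cfc (fun t : ℝ => (1/2:ℝ)) s := by
      rw [cfc_const _ s, Algebra.algebraMap_eq_smul_one]
    rw [e1, e2, hyp, ← cfc_sub _ _ s (by fun_prop) (by fun_prop),
      cfcmul _ _ (fun t : ℝ => max (t - 1/2) 0 - 1/2) (by fun_prop) cg]
    intro t
    rcases le_total t (1/2) with h | h
    · rw [max_eq_right (by linarith), min_eq_left h]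
      have : 1 - t ≠ 0 := by intro h; linarith
      field_simp
      ring
    · rw [max_eq_left (by linarith), min_eq_right h]
      ring
  have npy : ∀ i, p i * yp ∉ J := by
    intro i hi
    apply np i
    have h1 : p i * (s - 1) * cfc (fun t : ℝ => (1 / (2 * (1 - min t (1/2))) : ℝ)) s ∈ J := by
      apply J.mul_mem_right
      rw [mul_sub, ps, mul_one]; exact pp i
    rw [mul_assoc, ← key1, mul_sub] at h1
    have h2 := smul_mem' (2:ℂ) (J.sub_mem hi h1)
    have : (2:ℂ) • (p i * yp - (p i * yp - p i * ((1/2:ℝ) • (1:A)))) = p i := by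
      rw [sub_sub_cancel, mul_smul_comm, mul_one, ← Complex.coe_smul, smul_smul]
      norm_num
    rwa [this] at h2
  have hymJ : ym ∈ J := by
    by_contra hy
    apply hN
    have sq : ∀ i, IsSelfAdjoint (p i * yp) := fun i => by
      rw [IsSelfAdjoint, star_mul, syp.star_eq, (sp i).star_eq, (cyp i).eq]
    have ym0 : ∀ i, (p i * yp) * ym = 0 := fun i => by rw [mul_assoc, hyy, mul_zero]
    refine ⟨Fin.cons ym fun i => p i * yp, ?_, ?_, ?_⟩
    · intro j
      refine Fin.cases ?_ ?_ j
      · simpa using sym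
      · intro j; simpa using sq j
    · intro j l
      refine Fin.cases ?_ ?_ j
      · refine Fin.cases ?_ ?_ l
        · simp
        · intro l _; simpa using star_orth (sq l) sym (ym0 l)
      · intro j
        refine Fin.cases ?_ ?_ l
        · intro _; simpa using ym0 j
        · intro l hjl
          have hjl' : j ≠ l := by rintro rfl; exact hjl rfl
          simp only [Fin.cons_succ]
          rw [← (cyp j).eq, mul_assoc, ← mul_assoc (p j), op j l hjl']; simp
    · intro j
      refine Fin.cases ?_ ?_ j
      · simpa using hy
      · intro j; simpa using npy j
  have cg2 : Continuous fun t : ℝ => (-(1 / max t (1/2)) : ℝ) := by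
    apply Continuous.neg
    apply Continuous.div (by fun_prop) (by fun_prop)
    intro t
    have := le_max_right t (1/2 : ℝ)
    intro h; linarith
  have cga : Continuous fun t : ℝ => 2 * (1 - t) := by fun_prop
  have cgb : Continuous fun t : ℝ => max (1/2 - t) 0 := by fun_prop
  have cgc : Continuous fun t : ℝ => t * t - t := by fun_prop
  have hsq : s * s - s = cfc (fun t : ℝ => t * t - t) s := by
    rw [cfc_sub _ _ s (by fun_prop) (by fun_prop), cfc_mul _ _ s (by fun_prop) (by fun_prop), hid]
  have key2 : 1 - s = cfc (fun t : ℝ => 2 * (1 - t)) s * ym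
      + (s * s - s) * cfc (fun t : ℝ => (-(1 / max t (1/2)) : ℝ)) s := by
    have e1 : 1 - s = cfc (fun t : ℝ => 1 - t) s := by
      rw [cfc_sub _ _ s (by fun_prop) (by fun_prop), hid, h1d]
    rw [hsq, hym, ← cfc_mul _ _ s cga.continuousOn cgb.continuousOn,
      ← cfc_mul _ _ s cgc.continuousOn cg2.continuousOn, ← cfc_add s _ _ (by fun_prop) (by exact (cgc.mul cg2).continuousOn), e1]
    congr 1
    funext t
    rcases le_total t (1/2) with h | h
    · rw [max_eq_left (by linarith), max_eq_right h]; ring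
    · rw [max_eq_right (by linarith), max_eq_left h]
      have : t ≠ 0 := by intro h; linarith
      field_simp; ring
  rw [key2]
  exact J.add_mem (J.mul_mem_left _ _ hymJ) (J.mul_mem_right _ _ hss)

end GH


namespace GH
open Topology Filter
variable {A : Type*} [CStarAlgebra A]

lemma exists_v {J : TwoSidedIdeal A} (hJ : IsCoatom J) {m : ℕ} (hN : ¬ OrthFam J (m + 1))
    {p : Fin m → A} (sp : ∀ i, IsSelfAdjoint (p i)) (op : ∀ i j, i ≠ j → p i * p j = 0)
    (np : ∀ i, p i ∉ J) (pp : ∀ i, p i * p i - p i ∈ J) (z i : Fin m) :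
    ∃ t : A, star (p i * t * p z) * (p i * t * p z) - p z ∈ J ∧
      (p i * t * p z) * star (p i * t * p z) - p i ∈ J := by
  obtain ⟨t, ht⟩ := prime hJ (np i) (np z)
  obtain ⟨v, hv⟩ : ∃ v, v = p i * t * p z := ⟨_, rfl⟩
  rw [← hv] at ht
  have svv : star v * v = p z * (star t * (p i * p i) * t) * p z := by
    rw [hv, star_mul, star_mul, (sp i).star_eq, (sp z).star_eq]; noncomm_ring
  have svv' : v * star v = p i * (t * (p z * p z) * star t) * p i := by
    rw [hv, star_mul, star_mul, (sp i).star_eq, (sp z).star_eq]; noncomm_ring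
  obtain ⟨μ, hμ⟩ := scal_real hJ hN sp op np pp z (b := star t * (p i * p i) * t) (by
    rw [IsSelfAdjoint, star_mul, star_mul, star_mul, (sp i).star_eq, star_star]; noncomm_ring)
  rw [← svv] at hμ
  obtain ⟨ν, hν⟩ := scal_real hJ hN sp op np pp i (b := t * (p z * p z) * star t) (by
    rw [IsSelfAdjoint, star_mul, star_mul, star_mul, (sp z).star_eq, star_star]; noncomm_ring)
  rw [← svv'] at hν
  have hμ0 : μ ≠ 0 := by
    rintro rfl
    apply ht
    apply mem_of_star_mul hJ
    simpa using hμ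
  have hμp : 0 < μ := by
    rcases lt_or_gt_of_ne hμ0 with h | h
    · exfalso
      have hs : μ ∉ spectrum ℝ (star v * v) := fun h1 => by
        have h2 : 0 ≤ μ := spectrum_star_mul_self_nonneg μ h1
        linarith
      have hu := spectrum.notMem_iff.1 hs
      apply np z
      have h3 : (algebraMap ℝ A μ - star v * v) * p z ∈ J := by
        have := J.add_mem (J.mul_mem_right _ (p z) hμ) (smul_mem' (μ : ℂ) (pp z))
        have := J.neg_mem this
        convert this using 1
        rw [Algebra.algebraMap_eq_smul_one, Complex.coe_smul, Complex.coe_smul]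
        simp only [sub_mul, smul_mul_assoc, one_mul, smul_sub]
        abel
      obtain ⟨u, hu⟩ := hu
      rw [← hu] at h3
      have := J.mul_mem_left (↑u⁻¹) _ h3
      simpa using this
    · exact h
  have hνμ : ν = μ := by
    obtain ⟨Q, _, _, π, hπ⟩ := exists_quot J
    have h1 : π (v * p z) = π v := by
      rw [← sub_eq_zero, ← map_sub, hπ]
      have := J.mul_mem_left (p i * t) _ (pp z)
      convert this using 1
      rw [hv]; noncomm_ring
    have h2 : π (p i * v) = π v := by
      rw [← sub_eq_zero, ← map_sub, hπ]
      have := J.mul_mem_right _ (t * p z) (pp i)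
      convert this using 1
      rw [hv]; noncomm_ring
    rw [← hπ, map_sub, map_smul, sub_eq_zero, map_mul] at hμ hν
    have h3 : (μ : ℂ) • π v = (ν : ℂ) • π v := by
      rw [← h1, map_mul, ← mul_smul_comm, ← hμ, ← mul_assoc, hν, smul_mul_assoc, ← map_mul, h2,
        ← map_mul, h1]
    rw [← hπ] at ht
    by_contra hne
    rw [← sub_eq_zero, ← sub_smul] at h3
    rcases smul_eq_zero.1 h3 with h | h
    · rw [sub_eq_zero] at h
      exact hne (by exact_mod_cast h.symm)
    · exact ht h
  subst hνμ
  refine ⟨(√ν)⁻¹ • t, ?_, ?_⟩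
  all_goals
    have e : p i * ((√ν)⁻¹ • t) * p z = (√ν)⁻¹ • v := by simp [hv]
    rw [e, star_smul]
    have e2 : (√ν)⁻¹ * (√ν)⁻¹ = ν⁻¹ := by rw [← mul_inv, Real.mul_self_sqrt hμp.le]
    simp only [star_trivial, smul_mul_smul_comm, e2]
  · have := smul_mem' ((ν⁻¹ : ℝ) : ℂ) hμ
    rw [Complex.coe_smul, Complex.coe_smul, smul_sub, smul_smul, inv_mul_cancel₀ hμ0, one_smul] at this
    exact this
  · have := smul_mem' ((ν⁻¹ : ℝ) : ℂ) hν
    rw [Complex.coe_smul, Complex.coe_smul, smul_sub, smul_smul, inv_mul_cancel₀ hμ0, one_smul] at this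
    exact this

lemma exists_rep {J : TwoSidedIdeal A} (hJ : IsCoatom J) {m : ℕ} (hm : 1 ≤ m)
    (hN : ¬ OrthFam J (m + 1)) (hO : OrthFam J m) :
    ∃ φ : A →⋆ₙₐ[ℂ] Matrix (Fin m) (Fin m) ℂ, φ 1 ≠ 0 := by
  obtain ⟨p, sp, op, np, pp⟩ := base_proj hJ hN hO
  let z : Fin m := ⟨0, hm⟩
  have h := exists_v hJ hN sp op np pp z
  choose t h1 h2 using h
  obtain ⟨v, hv⟩ : ∃ v, v = fun i => p i * t i * p z := ⟨_, rfl⟩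
  have hvi : ∀ i, v i = p i * t i * p z := fun i => by rw [hv]
  simp only [← hvi] at h1 h2
  have hs := sum_one hN sp op np pp
  have hsc : ∀ i l a, ∃ c : ℂ, star (v i) * a * v l - c • p z ∈ J := by
    intro i l a
    obtain ⟨c, hc⟩ := scal hJ hN sp op np pp z (star (t i) * p i * a * (p l * t l))
    refine ⟨c, ?_⟩
    convert hc using 2
    rw [hvi, hvi, star_mul, star_mul, (sp i).star_eq, (sp z).star_eq]; noncomm_ring
  choose c hc using hsc
  obtain ⟨Q, _, _, π, hπ⟩ := exists_quot J
  have hP : π (p z) ≠ 0 := fun h => np z ((hπ _).1 h)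
  have uniq : ∀ {a b : ℂ}, a • π (p z) = b • π (p z) → a = b := by
    intro a b h
    rw [← sub_eq_zero, ← sub_smul] at h
    exact sub_eq_zero.1 ((smul_eq_zero.1 h).resolve_right hP)
  have hc' : ∀ i l a, π (star (v i) * a * v l) = c i l a • π (p z) := by
    intro i l a
    rw [← sub_eq_zero, ← map_smul, ← map_sub, hπ]; exact hc i l a
  have hPP : π (p z) * π (p z) = π (p z) := by
    rw [← map_mul, ← sub_eq_zero, ← map_sub, hπ]; exact pp z
  have h1' : ∀ i, π (star (v i) * v i) = π (p z) := fun i => by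
    rw [← sub_eq_zero, ← map_sub, hπ]; exact h1 i
  have hsum : ∑ i, π (v i * star (v i)) = 1 := by
    have : ∀ i, π (v i * star (v i)) = π (p i) := fun i => by
      rw [← sub_eq_zero, ← map_sub, hπ]; exact h2 i
    simp only [this]
    rw [← map_sum, ← map_one π, ← sub_eq_zero, ← neg_eq_zero, neg_sub, ← map_sub, hπ]; exact hs
  refine ⟨{ toFun := fun a => Matrix.of fun i l => c i l a, map_smul' := ?_, map_zero' := ?_, map_add' := ?_, map_mul' := ?_, map_star' := ?_ }, ?_⟩
  · intro x a
    ext i l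
    apply uniq
    simp [← hc', ← smul_smul]
  · ext i l
    apply uniq
    simp [← hc']
  · intro a b
    ext i l
    apply uniq
    simp [← hc', add_smul, mul_add, add_mul]
  · intro a b
    ext i l
    apply uniq
    simp only [Matrix.of_apply, Matrix.mul_apply, Finset.sum_smul]
    have : ∀ n, (c i n a * c n l b) • π (p z) = π (star (v i) * a) * π (v n * star (v n)) * π (b * v l) := by
      intro n
      rw [← hPP, ← smul_mul_smul_comm, ← hc', ← hc', ← map_mul, ← map_mul, ← map_mul]
      congr 1; noncomm_ring
    simp only [this]
    rw [← Finset.sum_mul, ← Finset.mul_sum, hsum, mul_one, ← hc', ← map_mul]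
    congr 1; noncomm_ring
  · intro a
    ext i l
    apply uniq
    simp only [Matrix.of_apply, Matrix.star_apply]
    rw [← hc', ← map_smul, ← sub_eq_zero, ← map_sub, hπ]
    have := star_mem hJ (hc l i a)
    convert this using 1
    simp [star_mul, (sp z).star_eq, mul_assoc]
  · intro h
    have h3 := congrFun (congrFun h z) z
    have h4 : c z z 1 = 0 := h3
    have := hc' z z 1
    rw [mul_one, h1', h4, zero_smul] at this
    exact hP this

lemma base {k : ℕ} (hk : 1 ≤ k)
    (hrep : ∀ (j : ℕ), 1 ≤ j → j < k →
        ∀ φ : A →⋆ₙₐ[ℂ] Matrix (Fin j) (Fin j) ℂ, ∀ a : A, φ a = 0)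
    {J : TwoSidedIdeal A} (hJ : IsCoatom J) : OrthFam J k := by
  have : ∀ m, m ≤ k → 1 ≤ m → OrthFam J m := by
    intro m
    induction m with
    | zero => intro _ h; omega
    | succ m ih =>
      intro hmk _
      rcases Nat.eq_zero_or_pos m with rfl | hm
      · refine ⟨fun _ => 1, fun _ => IsSelfAdjoint.one A, fun i j h => absurd (Fin.ext (by omega)) h, fun _ => one_notMem hJ⟩
      · by_contra hN
        obtain ⟨φ, hφ⟩ := exists_rep hJ hm hN (ih (by omega) hm)
        exact hφ (hrep m hm (by omega) φ 1)
  exact this k le_rfl hk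

end GH


namespace GH
open Topology Filter
variable {A : Type*} [CStarAlgebra A]

lemma sa_conj {b : A} (hb : IsSelfAdjoint b) (x : A) : IsSelfAdjoint (x * b * star x) := by
  rw [IsSelfAdjoint, star_mul, star_mul, star_star, hb.star_eq, mul_assoc]

lemma sa_comm {a b : A} (ha : IsSelfAdjoint a) (hb : IsSelfAdjoint b) (h : Commute a b) :
    IsSelfAdjoint (a * b) := by
  rw [IsSelfAdjoint, star_mul, ha.star_eq, hb.star_eq, h.eq]

lemma exists_small {ι : Type*} [Finite ι] (f : ι → ℝ) (hf : ∀ i, 0 < f i) :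
    ∃ ε > 0, ∀ i, ε < f i := by
  have : ∀ᶠ ε in 𝓝[>] (0:ℝ), ∀ i, ε < f i := by
    rw [Filter.eventually_all]
    intro i
    exact (eventually_lt_nhds (hf i)).filter_mono nhdsWithin_le_nhds
  obtain ⟨ε, h1, h2⟩ := (this.and self_mem_nhdsWithin).exists
  exact ⟨ε, h2, h1⟩

lemma sum_sa {ι : Type*} [Fintype ι] {x : ι → A} (sx : ∀ i, IsSelfAdjoint (x i)) :
    IsSelfAdjoint (∑ i, x i * x i) := by
  rw [IsSelfAdjoint, star_sum]
  exact Finset.sum_congr rfl fun i _ => by rw [star_mul, (sx i).star_eq]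

lemma sum_comm' {ι : Type*} [Fintype ι] {x : ι → A} 
    (ox : ∀ i j, i ≠ j → x i * x j = 0) (i : ι) : Commute (∑ i, x i * x i) (x i) := by
  apply Commute.sum_left
  intro j _
  by_cases h : j = i
  · subst h; simp [Commute, SemiconjBy, mul_assoc]
  · rw [Commute, SemiconjBy, mul_assoc, ox j i h, ← mul_assoc, ox i j (Ne.symm h)]; simp

lemma exists_CFsum {ι : Type*} [Fintype ι] {x : ι → A} (sx : ∀ i, IsSelfAdjoint (x i))
    (ε : ℝ) (hε : 0 < ε) :
    ∃ X : CF (∑ i, x i * x i) (ε ^ 2), ∀ i, ‖x i - X.e * x i‖ ≤ ε := by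
  obtain ⟨X⟩ := exists_CF _ (sum_sa sx) (ε ^ 2) (by positivity)
  refine ⟨X, fun i => ?_⟩
  let _ := CStarAlgebra.spectralOrder A
  let _ := CStarAlgebra.spectralOrderedRing A
  have hp : ∀ i, 0 ≤ x i * x i := fun i => by
    have := star_mul_self_nonneg (x i)
    rwa [(sx i).star_eq] at this
  have h0 : 0 ≤ ∑ i, x i * x i := Finset.sum_nonneg fun i _ => hp i
  have hs := X.small (fun t ht => spectrum_nonneg_of_nonneg h0 ht)
  have se : IsSelfAdjoint (1 - X.e) := (IsSelfAdjoint.one A).sub X.se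
  have hle : x i * x i ≤ ∑ i, x i * x i :=
    Finset.single_le_sum (f := fun i => x i * x i) (fun i _ => hp i) (Finset.mem_univ i)
  have h1 : star (1 - X.e) * (x i * x i) * (1 - X.e) ≤ star (1 - X.e) * (∑ i, x i * x i) * (1 - X.e) :=
    star_left_conjugate_le_conjugate hle _
  have h2 : 0 ≤ star (1 - X.e) * (x i * x i) * (1 - X.e) := star_left_conjugate_nonneg (hp i) _
  have h3 := CStarAlgebra.norm_le_norm_of_nonneg_of_le h2 h1
  rw [se.star_eq] at h3
  have h4 := sq_small ε (by rw [(sx i).star_eq]) X.se (h3.trans hs) hε.le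
  rw [← norm_star]
  simpa [(sx i).star_eq, X.se.star_eq] using h4

lemma prodE {J : TwoSidedIdeal A} (hJ : IsCoatom J) : ∀ {n : ℕ} (a : Fin n → A), (∀ i, a i ∉ J) →
    ∃ y, y ∉ J ∧ ∃ P T : Fin n → A, ∀ i, y = P i * a i * T i := by
  intro n
  induction n with
  | zero => intro a _; exact ⟨1, one_notMem hJ, fun _ => 1, fun _ => 1, fun i => i.elim0⟩
  | succ n ih =>
    intro a ha
    obtain ⟨y, hy, P, T, h⟩ := ih (fun i => a i.succ) (fun i => ha _)
    obtain ⟨t, ht⟩ := prime hJ (ha 0) hy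
    refine ⟨_, ht, Fin.cons 1 fun i => a 0 * t * P i, Fin.cons (t * y) T, ?_⟩
    intro i
    refine Fin.cases ?_ ?_ i
    · simp [mul_assoc]
    · intro i
      simp only [Fin.cons_succ]
      conv_lhs => rw [h i]
      simp only [mul_assoc]

lemma equalize {J : TwoSidedIdeal A} (hJ : IsCoatom J) {n : ℕ} (a : Fin n → A) (ha : ∀ i, a i ∉ J)
    (sa : ∀ i, IsSelfAdjoint (a i)) :
    ∃ (y : A) (b : Fin n → A), y ∉ J ∧ (∀ i, IsSelfAdjoint (b i)) ∧ (∀ i, ∃ x, b i = a i * x * a i) ∧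
      ∀ J' : TwoSidedIdeal A, IsCoatom J' → ∀ i, b i ∈ J' ↔ y ∈ J' := by
  obtain ⟨y, hy, P, T, h⟩ := prodE hJ a ha
  have hz : ∀ i, a i * star (P i) * y * star (a i * star (P i) * y) =
      a i * (star (P i) * y * star y * P i) * a i := by
    intro i
    rw [star_mul, star_mul, star_star, (sa i).star_eq]; noncomm_ring
  refine ⟨y, fun i => a i * (star (P i) * y * star y * P i) * a i, hy, ?_, ?_, ?_⟩
  · intro i
    simp only [← hz]
    exact IsSelfAdjoint.mul_star_self _
  · intro i
    exact ⟨_, rfl⟩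
  · intro J' hJ' i
    simp only [← hz]
    constructor
    · intro h1
      have h2 := mem_of_mul_star hJ' h1
      apply mem_of_star_mul hJ'
      have h3 := J'.mul_mem_left (star (T i)) _ h2
      convert h3 using 1
      conv_lhs => rw [h i, star_mul, star_mul, ← h i, (sa i).star_eq]
      noncomm_ring
    · intro h1
      exact J'.mul_mem_right _ _ (J'.mul_mem_left _ _ h1)

lemma lemD {m n : ℕ} {c : Fin m → A} {δ : ℝ} (X : CF (∑ i, c i * c i) δ)
    (sc : ∀ i, IsSelfAdjoint (c i))
    (hfam : ∀ J : TwoSidedIdeal A, IsCoatom J → ∃ a : Fin (n + 1) → A, (∀ i, IsSelfAdjoint (a i)) ∧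
      (∀ i j, i ≠ j → a i * a j = 0) ∧ (∀ i l, a i * c l = 0) ∧ ∀ i, a i ∉ J)
    {J : TwoSidedIdeal A} (hJ : IsCoatom J) :
    ∃ (r : A) (d : Fin n → A), IsSelfAdjoint r ∧ Full r ∧ X.γ * r = 0 ∧ (∀ i, IsSelfAdjoint (d i)) ∧
      (∀ i j, i ≠ j → d i * d j = 0) ∧ (∀ i l, d i * c l = 0) ∧ (∀ i, d i ∉ J) ∧ ∀ i, d i * r = 0 := by
  obtain ⟨a, sa, oa, ac, na⟩ := hfam J hJ
  obtain ⟨y, b, hy, sb, hb, hbJ⟩ := equalize hJ a na sa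
  have ob : ∀ i j, i ≠ j → b i * b j = 0 := by
    intro i j hij
    obtain ⟨x, hx⟩ := hb i
    obtain ⟨x', hx'⟩ := hb j
    rw [hx, hx', mul_assoc, mul_assoc (a j), ← mul_assoc (a i) (a j), oa i j hij]; simp
  have bc : ∀ i l, b i * c l = 0 := by
    intro i l
    obtain ⟨x, hx⟩ := hb i
    rw [hx, mul_assoc, ac]; simp
  have cb : ∀ i l, c l * b i = 0 := fun i l => star_orth (sb i) (sc l) (bc i l)
  have nb : ∀ i, b i ∉ J := fun i h => hy ((hbJ J hJ i).1 h)
  have hop := fun i : Fin n => notMem.open hJ (nb i.succ)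
  choose ε hε hop using hop
  obtain ⟨ε', hε', hsm⟩ := exists_small ε hε
  have obs : ∀ i j : Fin n, i ≠ j → b i.succ * b j.succ = 0 := fun i j h =>
    ob _ _ (fun h' => h (Fin.succ_injective _ h'))
  obtain ⟨Y, hY⟩ := exists_CFsum (x := fun i : Fin n => b i.succ) (fun i => sb _) ε' hε'
  have cTb : ∀ i : Fin n, Commute (∑ i : Fin n, b i.succ * b i.succ) (b i.succ) := fun i =>
    sum_comm' (x := fun i : Fin n => b i.succ) obs i
  have cYb : ∀ i : Fin n, Commute Y.e (b i.succ) := fun i => Y.ce _ (cTb i)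
  have TC : (∑ i : Fin n, b i.succ * b i.succ) * (∑ i, c i * c i) = 0 := by
    rw [Finset.sum_mul]
    apply Finset.sum_eq_zero
    intro i _
    rw [Finset.mul_sum]
    apply Finset.sum_eq_zero
    intro l _
    rw [mul_assoc, ← mul_assoc (b _) (c l), bc]; simp
  have CT : (∑ i, c i * c i) * (∑ i : Fin n, b i.succ * b i.succ) = 0 :=
    star_orth (sum_sa fun i => sb _) (sum_sa sc) TC
  have cTC : Commute (∑ i : Fin n, b i.succ * b i.succ) (∑ i, c i * c i) := by
    rw [Commute, SemiconjBy, TC, CT]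
  have crr : Commute X.r Y.r := X.cr _ (Y.cr _ cTC).symm
  have Tb0 : (∑ i : Fin n, b i.succ * b i.succ) * b 0 = 0 := by
    rw [Finset.sum_mul]
    apply Finset.sum_eq_zero
    intro i _
    rw [mul_assoc, ob _ _ (Fin.succ_ne_zero i), mul_zero]
  have Cx : ∀ x, (∀ l, c l * x = 0) → (∑ i, c i * c i) * x = 0 := by
    intro x hx
    rw [Finset.sum_mul]
    apply Finset.sum_eq_zero
    intro i _
    rw [mul_assoc, hx, mul_zero]
  have sr : IsSelfAdjoint (X.r * Y.r) := sa_comm X.sr Y.sr crr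
  have sd : ∀ i : Fin n, IsSelfAdjoint (Y.e * b i.succ) := fun i => sa_comm Y.se (sb _) (cYb i)
  refine ⟨X.r * Y.r, fun i => Y.e * b i.succ, sr, ?_, ?_, sd, ?_, ?_, ?_, ?_⟩
  · intro J' hJ' h
    have h0 : b 0 ∈ J' := by
      have h1 := J'.mul_mem_right _ (b 0) h
      rwa [mul_assoc, Y.r_mul Tb0, X.r_mul (Cx _ (cb 0))] at h1
    have hy' := (hbJ J' hJ' 0).1 h0
    have hT : (∑ i : Fin n, b i.succ * b i.succ) ∈ J' :=
      sum_mem fun i _ => J'.mul_mem_left _ _ ((hbJ J' hJ' _).2 hy')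
    have hr : X.r ∈ J' := by
      have h2 := J'.add_mem h (J'.mul_mem_left X.r _ (J'.mul_mem_right _ Y.gr hT))
      have h3 := Y.r1
      generalize Y.gr = gg at *
      rw [h3, ← mul_add, sub_add_cancel, mul_one] at h2
      exact h2
    obtain ⟨a', sa', -, ac', na'⟩ := hfam J' hJ'
    apply na' 0
    have := J'.mul_mem_right _ (a' 0) hr
    rwa [X.r_mul (Cx _ fun l => star_orth (sa' 0) (sc l) (ac' 0 l))] at this
  · rw [← mul_assoc, X.γr, zero_mul]
  · intro i j hij
    show Y.e * b i.succ * (Y.e * b j.succ) = 0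
    rw [(cYb j).eq, mul_assoc, ← mul_assoc (b i.succ), obs i j hij]; simp
  · intro i l
    show Y.e * b i.succ * c l = 0
    rw [mul_assoc, bc, mul_zero]
  · intro i
    exact hop i _ ((hY i).trans_lt (hsm i))
  · intro i
    apply star_orth sr (sd i)
    rw [mul_assoc, ← mul_assoc Y.r, Y.re]; simp

end GH


namespace GH
open Topology Filter
variable {A : Type*} [CStarAlgebra A]

def SS (A : Type*) [CStarAlgebra A] (m n : ℕ) : Prop :=
  ∃ c : Fin m → A, (∀ i, IsSelfAdjoint (c i)) ∧ (∀ i, Full (c i)) ∧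
    (∀ i j, i ≠ j → c i * c j = 0) ∧
    ∀ J : TwoSidedIdeal A, IsCoatom J → ∃ a : Fin n → A, (∀ i, IsSelfAdjoint (a i)) ∧
      (∀ i j, i ≠ j → a i * a j = 0) ∧ (∀ i l, a i * c l = 0) ∧ ∀ i, a i ∉ J

lemma norm_e3 {e c : A} {ε : ℝ} (he : ‖e‖ ≤ 1) (h : ‖c - e * c‖ ≤ ε) :
    ‖c - e * e * e * c‖ ≤ 3 * ε := by
  have hd : ∀ x : A, ‖e * x‖ ≤ ‖x‖ := fun x =>
    (norm_mul_le _ _).trans (mul_le_of_le_one_left (norm_nonneg _) he)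
  have : c - e * e * e * c = (c - e * c) + (e * (c - e * c) + e * (e * (c - e * c))) := by noncomm_ring
  rw [this]
  have h1 := hd (c - e * c)
  have h2 := hd (e * (c - e * c))
  have h3 := norm_add_le (c - e * c) (e * (c - e * c) + e * (e * (c - e * c)))
  have h4 := norm_add_le (e * (c - e * c)) (e * (e * (c - e * c)))
  linarith

lemma step [Nontrivial A] (hsr1 : Dense {a : A | IsUnit a}) {m n : ℕ} (h : SS A m (n + 1)) :
    SS A (m + 1) n := by
  obtain ⟨c, sc, fc, oc, hfam⟩ := h
  have hop := fun i => (fc i).open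
  choose ε hε hop using hop
  obtain ⟨ε', hε', hsm⟩ := exists_small ε hε
  obtain ⟨X, hX⟩ := exists_CFsum sc (ε' / 3) (by positivity)
  have cXc : ∀ i, Commute X.e (c i) := fun i => X.ce _ (sum_comm' oc i)
  obtain ⟨e, he⟩ : ∃ e, e = X.e := ⟨_, rfl⟩
  have se : IsSelfAdjoint e := he ▸ X.se
  have cec : ∀ i, Commute e (c i) := fun i => he ▸ cXc i
  have cE : ∀ i, Commute (e * e * e) (c i) := fun i => ((cec i).mul_left (cec i)).mul_left (cec i)
  have sE : IsSelfAdjoint (e * e * e) := by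
    rw [IsSelfAdjoint, star_mul, star_mul, se.star_eq, mul_assoc]
  have eX : ∀ x, X.γ * x = 0 → e * x = 0 := fun x hx => by
    rw [he, ← X.eγ, mul_assoc, hx, mul_zero]
  have xe : ∀ x, (∀ l, x * c l = 0) → x * e = 0 := by
    intro x hx
    rw [he]
    apply X.mul_e
    rw [Finset.mul_sum]
    apply Finset.sum_eq_zero
    intro i _
    rw [← mul_assoc, hx, zero_mul]
  -- data
  let ι := {J : TwoSidedIdeal A // IsCoatom J}
  have hD := fun J : ι => lemD X sc hfam J.2
  choose r d sr fr γr sd od dc nd dr using hD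
  have hE := fun J : ι => prodE J.2 (d J) (nd J)
  choose y hy P T hyd using hE
  obtain ⟨F, ε₁, hε₁, hF⟩ := compact y (fun J hJ => ⟨⟨J, hJ⟩, hy _⟩)
  obtain ⟨J0, hJ0, -⟩ := exists_coatom (⊥ : TwoSidedIdeal A) (by
    intro h; exact one_ne_zero ((TwoSidedIdeal.mem_bot _).1 h))
  obtain ⟨cn, scn, fcn, ⟨α, hα⟩, hu⟩ := lemP hsr1 F (γ := X.γ) (e' := X.e) (c0 := r ⟨J0, hJ0⟩) r X.sγ X.se X.γe
    (sr _) (fun i _ => sr i) (fr _) (fun i _ => fr i) (γr _) (fun i _ => γr i)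
  rw [← he] at hu
  have ecn : e * cn = 0 := by rw [hα, ← mul_assoc, eX _ (γr _), zero_mul]
  have sc' : ∀ i, IsSelfAdjoint (e * e * e * c i) := fun i => sa_comm sE (sc i) (cE i)
  have c'cn : ∀ i, (e * e * e * c i) * cn = 0 := by
    intro i
    rw [(cE i).eq, mul_assoc, mul_assoc (e * e), ecn]; simp
  refine ⟨Fin.cons cn fun i => e * e * e * c i, ?_, ?_, ?_, ?_⟩
  · intro j
    refine Fin.cases ?_ ?_ j
    · simpa using scn
    · intro j; simpa using sc' j
  · intro j
    refine Fin.cases ?_ ?_ j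
    · simpa using fcn
    · intro j
      simp only [Fin.cons_succ]
      apply hop j
      have := norm_e3 (he ▸ X.ne) (he ▸ hX j)
      have := hsm j
      linarith
  · intro j l
    refine Fin.cases ?_ ?_ j
    · refine Fin.cases ?_ ?_ l
      · simp
      · intro l _; simpa using star_orth (sc' l) scn (c'cn l)
    · intro j
      refine Fin.cases ?_ ?_ l
      · intro _; simpa using c'cn j
      · intro l hjl
        have hjl' : j ≠ l := by rintro rfl; exact hjl rfl
        simp only [Fin.cons_succ]
        rw [(cE l).eq, mul_assoc, ← mul_assoc (c j), oc j l hjl']; simp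
  · intro J' hJ'
    obtain ⟨J, hJF, hJ⟩ := hF J' hJ'
    have ny : y J ∉ J' := by
      intro h
      have := hJ _ h
      simp at this
      linarith
    have nd' : ∀ i, d J i ∉ J' := by
      intro i h
      apply ny
      rw [hyd J i]
      exact J'.mul_mem_right _ _ (J'.mul_mem_left _ _ h)
    obtain ⟨u, hu1, hu2, hue, β, hβ⟩ := hu J hJF
    have hse : star u * (e * e * e) = e * e * e := by
      conv_lhs => rw [← hue, ← mul_assoc, hu1, one_mul]
    refine ⟨fun i => u * d J i * star u, fun i => sa_conj (sd J i) u, ?_, ?_, ?_⟩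
    · intro i j hij
      show u * d J i * star u * (u * d J j * star u) = 0
      have : u * d J i * star u * (u * d J j * star u) = u * (d J i * (star u * u) * d J j) * star u := by
        noncomm_ring
      rw [this, hu1, mul_one, od J i j hij]; simp
    · intro i l
      refine Fin.cases ?_ ?_ l
      · simp only [Fin.cons_zero]
        have : u * d J i * star u * cn = u * (d J i * (star u * cn * u)) * star u := by
          have : u * (d J i * (star u * cn * u)) * star u = u * d J i * star u * cn * (u * star u) := by
            noncomm_ring
          rw [this, hu2, mul_one]
        rw [this, hβ, ← mul_assoc (d J i), dr]; simp
      · intro l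
        simp only [Fin.cons_succ]
        have : u * d J i * star u * (e * e * e * c l) = u * d J i * (star u * (e * e * e)) * c l := by
          noncomm_ring
        rw [this, hse]
        have : u * d J i * (e * e * e) * c l = u * (d J i * e) * (e * e * c l) := by noncomm_ring
        rw [this, xe _ (dc J i)]; simp
    · intro i h
      apply nd' i
      have h1 := J'.mul_mem_left (star u) _ (J'.mul_mem_right _ u h)
      have : star u * (u * d J i * star u * u) = (star u * u) * d J i * (star u * u) := by noncomm_ring
      rw [this, hu1] at h1
      simpa using h1

lemma full_fam [Nontrivial A] (hsr1 : Dense {a : A | IsUnit a}) {k : ℕ} (hk : 1 ≤ k)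
    (hrep : ∀ (j : ℕ), 1 ≤ j → j < k →
        ∀ φ : A →⋆ₙₐ[ℂ] Matrix (Fin j) (Fin j) ℂ, ∀ a : A, φ a = 0) :
    ∃ c : Fin k → A, (∀ i, IsSelfAdjoint (c i)) ∧ (∀ i, Full (c i)) ∧
    (∀ i j, i ≠ j → c i * c j = 0) := by
  have : ∀ m n, m + n = k → SS A m n := by
    intro m
    induction m with
    | zero =>
      intro n hn
      have : n = k := by omega
      subst this
      refine ⟨fun i => i.elim0, fun i => i.elim0, fun i => i.elim0, fun i => i.elim0, ?_⟩
      intro J hJ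
      obtain ⟨a, sa, oa, na⟩ := base hk hrep hJ
      exact ⟨a, sa, oa, fun _ l => l.elim0, na⟩
    | succ m ih =>
      intro n hn
      exact step hsr1 (ih (n + 1) (by omega))
  obtain ⟨c, h1, h2, h3, -⟩ := this k 0 rfl
  exact ⟨c, h1, h2, h3⟩

/-- a family of `k` mutually orthogonal equivalent full elements -/
lemma exists_y [Nontrivial A] (hsr1 : Dense {a : A | IsUnit a}) {k : ℕ} (hk : 1 ≤ k)
    (hrep : ∀ (j : ℕ), 1 ≤ j → j < k →
        ∀ φ : A →⋆ₙₐ[ℂ] Matrix (Fin j) (Fin j) ℂ, ∀ a : A, φ a = 0) :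
    ∃ (c : A) (y : Fin k → A), IsSelfAdjoint c ∧ Full c ∧ ∀ i j, star (y i) * y j = if i = j then c * c else 0 := by
  obtain ⟨x, sx, fx, ox⟩ := full_fam hsr1 hk hrep
  obtain ⟨c, sc, fc, -, hu⟩ := lemP hsr1 Finset.univ (γ := 0) (e' := 0) (c0 := 1) x (IsSelfAdjoint.zero A)
    (IsSelfAdjoint.zero A) (by simp) (IsSelfAdjoint.one A) (fun i _ => sx i) Full.one (fun i _ => fx i)
    (by simp) (by simp)
  have hu := fun i => hu i (Finset.mem_univ i)
  choose u hu1 hu2 _ β hβ using hu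
  refine ⟨c, fun i => star (u i) * c, sc, fc, ?_⟩
  intro i j
  have e : star (star (u i) * c) * (star (u j) * c) = c * (u i * star (u j)) * c := by
    rw [star_mul, star_star, sc.star_eq]; noncomm_ring
  rw [e]
  split_ifs with h
  · subst h; rw [hu2, mul_one]
  · have h1 : star (u i) * c * u i * (star (u j) * c * u j) = 0 := by
      have e1 : star (u i) * c * u i = star (β i) * x i := by
        have := congrArg star (hβ i)
        rw [star_mul, star_mul, star_mul, star_star, sc.star_eq, (sx i).star_eq] at this
        rw [← this, mul_assoc]
      rw [e1, hβ j, mul_assoc, ← mul_assoc (x i), ox i j h]; simp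
    have h2 : u i * (star (u i) * c * u i * (star (u j) * c * u j)) * star (u j) =
      (u i * star (u i)) * (c * (u i * star (u j)) * c) * (u j * star (u j)) := by noncomm_ring
    rw [h1, hu2, hu2, one_mul, mul_one] at h2
    rw [← h2]; simp

end GH


namespace GH
open Topology Filter ZeroAtInfty
variable {A : Type*} [CStarAlgebra A]

abbrev C01 := C₀(↥(Set.Ioc (0:ℝ) 1), ℂ)

noncomputable def ext (f : C01) (t : ℝ) : ℂ :=
  if h : 0 < t then f ⟨min 1 t, lt_min one_pos h, min_le_left _ _⟩ else 0

lemma ext_of_le (f : C01) {t : ℝ} (h : t ≤ 0) : ext f t = 0 := dif_neg (not_lt.2 h)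

lemma near_zero (f : C01) (ε : ℝ) (hε : 0 < ε) : ∃ η > 0, ∀ s < η, ‖ext f s‖ < ε := by
  have h := zero_at_infty f
  have h1 := h.eventually (Metric.ball_mem_nhds 0 hε)
  rw [Filter.eventually_iff, Filter.mem_cocompact] at h1
  obtain ⟨K, hK, hKs⟩ := h1
  have hK' : IsCompact ((fun x : ↥(Set.Ioc (0:ℝ) 1) => (x:ℝ)) '' K) := hK.image continuous_subtype_val
  have h0 : (0:ℝ) ∈ ((fun x : ↥(Set.Ioc (0:ℝ) 1) => (x:ℝ)) '' K)ᶜ := by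
    rintro ⟨x, _, hx⟩
    have := x.2.1
    simp only at hx
    linarith
  obtain ⟨η, hη, hb⟩ := Metric.isOpen_iff.1 hK'.isClosed.isOpen_compl 0 h0
  refine ⟨min η 1, lt_min hη one_pos, fun s hs => ?_⟩
  by_cases h : 0 < s
  · have hs1 := hs.trans_le (min_le_left _ _)
    have hs2 := hs.trans_le (min_le_right _ _)
    rw [ext, dif_pos h]
    have h2 : (⟨min 1 s, lt_min one_pos h, min_le_left _ _⟩ : ↥(Set.Ioc (0:ℝ) 1)) ∈ Kᶜ := by
      intro hmem
      have h3 : s ∈ Metric.ball (0:ℝ) η := by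
        rw [Metric.mem_ball, Real.dist_eq, sub_zero, abs_of_pos h]; exact hs1
      apply hb h3
      exact ⟨_, hmem, min_eq_right hs2.le⟩
    have := hKs h2
    simpa using this
  · rw [ext, dif_neg h]; simpa using hε

lemma ext_cont (f : C01) : Continuous (ext f) := by
  rw [continuous_iff_continuousAt]
  intro t
  rcases lt_or_ge 0 t with h | h
  · have : ContinuousOn (ext f) (Set.Ioi 0) := by
      rw [continuousOn_iff_continuous_domRestrict]
      have e : (Set.Ioi (0:ℝ)).domRestrict (ext f) = fun x : Set.Ioi (0:ℝ) =>
          f ⟨min 1 (x:ℝ), lt_min one_pos x.2, min_le_left _ _⟩ := by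
        funext x
        exact dif_pos x.2
      rw [e]
      apply f.continuous_toFun.comp
      fun_prop
    exact this.continuousAt (Ioi_mem_nhds h)
  · rw [Metric.continuousAt_iff']
    intro ε hε
    obtain ⟨η, hη, hs⟩ := near_zero f ε hε
    filter_upwards [Iio_mem_nhds (h.trans_lt hη)] with s hs'
    rw [ext_of_le f h, dist_zero_right]
    exact hs s hs'

lemma ext_add (f g : C01) (t : ℝ) : ext (f + g) t = ext f t + ext g t := by
  unfold ext; split_ifs <;> simp
lemma ext_mul (f g : C01) (t : ℝ) : ext (f * g) t = ext f t * ext g t := by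
  unfold ext; split_ifs <;> simp
lemma ext_zero (t : ℝ) : ext 0 t = 0 := by
  unfold ext; split_ifs <;> simp
lemma ext_smul (c : ℂ) (f : C01) (t : ℝ) : ext (c • f) t = c * ext f t := by
  unfold ext; split_ifs <;> simp
lemma ext_star (f : C01) (t : ℝ) : ext (star f) t = star (ext f t) := by
  unfold ext; split_ifs <;> simp

noncomputable def idf : C01 where
  toFun x := ((x : ℝ) : ℂ)
  continuous_toFun := by fun_prop
  zero_at_infty' := by
    rw [Metric.tendsto_nhds]
    intro ε hε
    rw [Filter.eventually_iff, Filter.mem_cocompact]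
    refine ⟨{x | ε ≤ (x : ℝ)}, ?_, ?_⟩
    · rw [Subtype.isCompact_iff]
      have : ((fun x : ↥(Set.Ioc (0:ℝ) 1) => (x:ℝ)) '' {x | ε ≤ (x : ℝ)}) = Set.Icc ε 1 := by
        ext x
        constructor
        · rintro ⟨y, hy, rfl⟩
          exact ⟨hy, y.2.2⟩
        · rintro ⟨h1, h2⟩
          exact ⟨⟨x, hε.trans_le h1, h2⟩, h1, rfl⟩
      rw [this]; exact isCompact_Icc
    · intro x hx
      have : (x:ℝ) < ε := not_le.1 hx
      simpa [abs_of_pos x.2.1] using this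

lemma ext_id (t : ℝ) : ext idf t = (clp t : ℂ) := by
  unfold ext
  split_ifs with h
  · show ((min 1 t : ℝ) : ℂ) = _
    unfold clp
    rw [max_eq_right]
    exact le_min zero_le_one h.le
  · rw [clp_of_le (not_lt.1 h)]; simp

noncomputable def psi (h : A) (hh : IsStarNormal h) (δ : ℝ) : C01 →⋆ₙₐ[ℂ] A where
  toFun f := cfc (fun z : ℂ => ext f (z.re / δ - 1)) h
  map_smul' c f := by
    have hc : Continuous fun z : ℂ => ext f (z.re / δ - 1) := (ext_cont f).comp (by fun_prop)
    simp only [ext_smul]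
    rw [cfc_const_mul c _ h hc.continuousOn]; rfl
  map_zero' := by simp only [ext_zero]; exact cfc_const_zero ℂ h
  map_add' f g := by
    have hc : Continuous fun z : ℂ => ext f (z.re / δ - 1) := (ext_cont f).comp (by fun_prop)
    have hd : Continuous fun z : ℂ => ext g (z.re / δ - 1) := (ext_cont g).comp (by fun_prop)
    simp only [ext_add]
    rw [cfc_add h _ _ hc.continuousOn hd.continuousOn]
  map_mul' f g := by
    have hc : Continuous fun z : ℂ => ext f (z.re / δ - 1) := (ext_cont f).comp (by fun_prop)
    have hd : Continuous fun z : ℂ => ext g (z.re / δ - 1) := (ext_cont g).comp (by fun_prop)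
    simp only [ext_mul]
    rw [cfc_mul _ _ h hc.continuousOn hd.continuousOn]
  map_star' f := by
    simp only [ext_star]
    rw [← cfc_star]

open ComplexOrder in
lemma exists_psi (c : A) (sc : IsSelfAdjoint c) (fc : Full c) :
    ∃ (ψ : C01 →⋆ₙₐ[ℂ] A) (N : A), IsSelfAdjoint N ∧ (∀ f, N * (c * c) * N * ψ f = ψ f) ∧
      ∃ f, Full (ψ f) := by
  have fh : Full (c * c) := fun J hJ h => fc J hJ (mem_of_sq hJ sc h)
  obtain ⟨ε, hε, hop⟩ := fh.open
  obtain ⟨h, hh⟩ : ∃ h, h = c * c := ⟨_, rfl⟩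
  rw [← hh] at hop ⊢
  have hsa : IsSelfAdjoint h := by rw [hh]; exact sa_comm sc sc (Commute.refl c)
  have hn : IsStarNormal h := hsa.isStarNormal
  have hsp : ∀ z ∈ spectrum ℂ h, 0 ≤ z.re ∧ z = (z.re : ℂ) := by
    let _ := CStarAlgebra.spectralOrder A
    let _ := CStarAlgebra.spectralOrderedRing A
    have h0 : 0 ≤ h := by
      have := star_mul_self_nonneg c
      rwa [sc.star_eq, ← hh] at this
    intro z hz
    have := spectrum_nonneg_of_nonneg h0 hz
    rw [Complex.nonneg_iff] at this
    exact ⟨this.1, Complex.ext rfl (by simp [← this.2])⟩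
  set δ := ε / 3 with hδ
  have δ0 : 0 < δ := by positivity
  have cN : Continuous fun z : ℂ => (((√(max z.re δ))⁻¹ : ℝ) : ℂ) := by
    apply Complex.continuous_ofReal.comp
    apply Continuous.inv₀ (by fun_prop)
    intro z
    exact (Real.sqrt_pos.2 (lt_max_of_lt_right δ0)).ne'
  have hid : h = cfc (fun z : ℂ => z) h := (cfc_id' ℂ h).symm
  refine ⟨psi h hn δ, cfc (fun z : ℂ => (((√(max z.re δ))⁻¹ : ℝ) : ℂ)) h, ?_, ?_, idf, ?_⟩
  · rw [IsSelfAdjoint, ← cfc_star]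
    simp
  · intro f
    have hc : Continuous fun z : ℂ => ext f (z.re / δ - 1) := (ext_cont f).comp (by fun_prop)
    show _ * cfc (fun z : ℂ => ext f (z.re / δ - 1)) h = cfc (fun z : ℂ => ext f (z.re / δ - 1)) h
    conv_lhs => enter [1, 1, 2]; rw [hid]
    have c1 : Continuous fun z : ℂ => (((√(max z.re δ))⁻¹ : ℝ) : ℂ) * z := cN.mul continuous_id
    have c2 : Continuous fun z : ℂ => (((√(max z.re δ))⁻¹ : ℝ) : ℂ) * z * (((√(max z.re δ))⁻¹ : ℝ) : ℂ) := c1.mul cN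
    rw [← cfc_mul _ _ h cN.continuousOn (by fun_prop),
      ← cfc_mul _ _ h c1.continuousOn cN.continuousOn,
      ← cfc_mul _ _ h c2.continuousOn hc.continuousOn]
    apply cfc_congr
    intro z hz
    obtain ⟨h1, h2⟩ := hsp z hz
    simp only
    rcases le_total z.re δ with h3 | h3
    · rw [ext_of_le f (by rw [sub_nonpos, div_le_one δ0]; exact h3)]; simp
    · rw [max_eq_left h3]
      have hz0 : 0 < z.re := δ0.trans_le h3
      have : (((√z.re)⁻¹ : ℝ) : ℂ) * z * (((√z.re)⁻¹ : ℝ) : ℂ) = 1 := by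
        rw [mul_right_comm, ← Complex.ofReal_mul, ← mul_inv, Real.mul_self_sqrt h1]
        conv_lhs => enter [2]; rw [h2]
        rw [← Complex.ofReal_mul, inv_mul_cancel₀ hz0.ne']; simp
      rw [this, one_mul]
  · apply Full.of_mul_left (a := h)
    apply hop
    have hc : Continuous fun z : ℂ => ext idf (z.re / δ - 1) := (ext_cont idf).comp (by fun_prop)
    show ‖h - h * cfc (fun z : ℂ => ext idf (z.re / δ - 1)) h‖ < ε
    have : h - h * cfc (fun z : ℂ => ext idf (z.re / δ - 1)) h
      = cfc (fun z : ℂ => z - z * ext idf (z.re / δ - 1)) h := by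
      have c1 : Continuous fun z : ℂ => z * ext idf (z.re / δ - 1) := continuous_id.mul hc
      rw [cfc_sub _ _ h (by fun_prop) c1.continuousOn, cfc_mul _ _ h (by fun_prop) hc.continuousOn, ← hid]
    rw [this]
    refine lt_of_le_of_lt (norm_cfc_le (c := 2 * δ) (by positivity) ?_) (by rw [hδ]; linarith)
    intro z hz
    obtain ⟨h1, h2⟩ := hsp z hz
    rw [ext_id]
    have e : z - z * (clp (z.re / δ - 1) : ℂ) = ((z.re * (1 - clp (z.re / δ - 1)) : ℝ) : ℂ) := by
      conv_lhs => rw [h2]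
      push_cast; simp; ring
    rw [e, Complex.norm_real, Real.norm_eq_abs, abs_of_nonneg (mul_nonneg h1 (sub_nonneg.2 (clp_le _)))]
    rcases le_total z.re (2 * δ) with h3 | h3
    · have := clp_nonneg (z.re / δ - 1)
      nlinarith
    · rw [clp_of_ge]
      · simp; positivity
      · rw [le_sub_iff_add_le, le_div_iff₀ δ0]; linarith

noncomputable def bigHom {k : ℕ} (ψ : C01 →⋆ₙₐ[ℂ] A) (N h : A) (y : Fin k → A) (sN : IsSelfAdjoint N)
    (hN : ∀ f, N * h * N * ψ f = ψ f)
    (hy : ∀ i j, star (y i) * y j = if i = j then h else 0) :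
    Matrix (Fin k) (Fin k) C01 →⋆ₙₐ[ℂ] A where
  toFun M := ∑ i, ∑ j, y i * N * ψ (M i j) * N * star (y j)
  map_smul' c M := by
    simp only [Matrix.smul_apply, map_smul, mul_smul_comm, smul_mul_assoc, Finset.smul_sum]; rfl
  map_zero' := by simp
  map_add' M M' := by
    simp only [Matrix.add_apply, map_add, mul_add, add_mul, Finset.sum_add_distrib]
  map_mul' M M' := by
    have key : ∀ i j l p, (y i * N * ψ (M i j) * N * star (y j)) * (y l * N * ψ (M' l p) * N * star (y p))
        = if j = l then y i * N * ψ (M i j * M' j p) * N * star (y p) else 0 := by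
      intro i j l p
      have e : (y i * N * ψ (M i j) * N * star (y j)) * (y l * N * ψ (M' l p) * N * star (y p))
        = y i * N * ψ (M i j) * (N * (star (y j) * y l) * N * ψ (M' l p)) * N * star (y p) := by
        noncomm_ring
      rw [e, hy]
      split_ifs with hjl
      · subst hjl
        rw [hN, map_mul]; noncomm_ring
      · simp
    have lhs : ∀ i p, y i * N * ψ ((M * M') i p) * N * star (y p) =
        ∑ j, y i * N * ψ (M i j * M' j p) * N * star (y p) := by
      intro i p
      rw [Matrix.mul_apply, map_sum, Finset.mul_sum, Finset.sum_mul, Finset.sum_mul]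
    simp only [lhs]
    rw [Finset.sum_mul]
    apply Finset.sum_congr rfl
    intro i _
    simp only [Finset.sum_mul, Finset.mul_sum, key]
    rw [Finset.sum_comm]
    apply Finset.sum_congr rfl
    intro j _
    symm
    rw [Finset.sum_comm]
    simp
  map_star' M := by
    rw [star_sum]
    simp only [star_sum, star_mul, star_star, sN.star_eq, ← map_star]
    rw [Finset.sum_comm]
    simp [Matrix.star_apply, mul_assoc]

lemma forward (hsr1 : Dense {a : A | IsUnit a})
    (k : ℕ) (hk : 1 ≤ k) 
    (hrep : ∀ (j : ℕ), 1 ≤ j → j < k →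
        ∀ φ : A →⋆ₙₐ[ℂ] Matrix (Fin j) (Fin j) ℂ, ∀ a : A, φ a = 0) :
      ∃ φ : Matrix (Fin k) (Fin k) C₀(↥(Set.Ioc (0:ℝ) 1), ℂ) →⋆ₙₐ[ℂ] A,
        ∀ I : TwoSidedIdeal A, IsClosed (I : Set A) →
          (∀ x, φ x ∈ I) → ∀ a : A, a ∈ I := by
  rcases subsingleton_or_nontrivial A with hs | hs
  · refine ⟨0, fun I _ _ a => ?_⟩
    rw [Subsingleton.elim a 0]; exact I.zero_mem
  obtain ⟨c, y, sc, fc, hy⟩ := exists_y hsr1 hk hrep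
  obtain ⟨ψ, N, sN, hN, f, hf⟩ := exists_psi c sc fc
  refine ⟨bigHom ψ N (c * c) y sN hN hy, fun I _ hI => ?_⟩
  let z : Fin k := ⟨0, hk⟩
  have h1 : ψ f ∈ I := by
    have h2 := I.mul_mem_left (N * star (y z)) _ (I.mul_mem_right _ (y z * N) (hI (Matrix.single z z f)))
    have h3 : bigHom ψ N (c * c) y sN hN hy (Matrix.single z z f) = y z * N * ψ f * N * star (y z) := by
      show ∑ i, ∑ j, y i * N * ψ (Matrix.single z z f i j) * N * star (y j) = _
      rw [Finset.sum_eq_single z, Finset.sum_eq_single z]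
      · simp
      · intro j _ hj; rw [Matrix.single_apply_of_ne _ _ _ _ _ (by simp [hj.symm])]; simp
      · simp
      · intro i _ hi
        apply Finset.sum_eq_zero
        intro j _
        rw [Matrix.single_apply_of_ne _ _ _ _ _ (by simp [hi.symm])]; simp
      · simp
    have h4 : ψ f * (N * (c * c) * N) = ψ f := by
      have := congrArg star (hN (star f))
      rw [star_mul, star_mul, star_mul, star_mul, sN.star_eq, sc.star_eq, ← map_star, star_star] at this
      rw [← mul_assoc] at this ⊢
      simpa [mul_assoc] using this
    have e : N * star (y z) * (y z * N * ψ f * N * star (y z) * (y z * N)) =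
      N * (star (y z) * y z) * N * (ψ f * (N * (star (y z) * y z) * N)) := by noncomm_ring
    rw [h3, e, hy, if_pos rfl, h4, hN] at h2
    exact h2
  have h5 : (1:A) ∈ I := by
    by_contra h
    obtain ⟨J, hJ, hIJ⟩ := exists_coatom I h
    exact hf J hJ (hIJ h1)
  intro a
  simpa using I.mul_mem_left a _ h5

end GH


namespace GH
open Topology Filter ZeroAtInfty
variable {A : Type*} [CStarAlgebra A]

lemma count {k j : ℕ} (S : Fin k → Matrix (Fin j) (Fin j) ℂ) (hS : ∀ i, S i ≠ 0)
    (o : ∀ i l, i ≠ l → star (S i) * S l = 0) : k ≤ j := by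
  have h1 : ∀ i, ∃ w, (S i).mulVec w ≠ 0 := by
    intro i
    by_contra! h
    apply hS i
    apply Matrix.toLin'.injective
    ext1; 
    ext w
    simp [h]
  choose w hw using h1
  have hli : LinearIndependent ℂ (fun i => WithLp.toLp 2 ((S i).mulVec (w i)) : Fin k → EuclideanSpace ℂ (Fin j)) := by
    apply linearIndependent_of_ne_zero_of_inner_eq_zero
    · intro i h
      apply hw i
      simpa using h
    · intro i l hil
      rw [EuclideanSpace.inner_toLp_toLp, Matrix.star_mulVec, dotProduct_comm, ← Matrix.dotProduct_mulVec,
        Matrix.mulVec_mulVec, ← Matrix.star_eq_conjTranspose, o i l hil]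
      simp
  have := hli.fintype_card_le_finrank
  simpa using this

open ComplexOrder in
lemma theta_zero {k j : ℕ} (hj : j < k)
    (θ : Matrix (Fin k) (Fin k) C01 →⋆ₙₐ[ℂ] Matrix (Fin j) (Fin j) ℂ) (x) : θ x = 0 := by
  have hs : ∀ i l f, θ (Matrix.single i l f) = 0 := by
    intro i l f
    by_contra hne
    have e1 : ∀ i, star (θ (Matrix.single i l f)) * θ (Matrix.single i l f) = θ (Matrix.single l l (star f * f)) := by
      intro i
      rw [← map_star, ← map_mul, Matrix.star_eq_conjTranspose, Matrix.conjTranspose_single, Matrix.single_mul_single_same]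
    have n1 : θ (Matrix.single l l (star f * f)) ≠ 0 := by
      rw [← e1 i]
      intro h
      exact hne (Matrix.conjTranspose_mul_self_eq_zero.1 h)
    have n2 : ∀ p, θ (Matrix.single p l f) ≠ 0 := by
      intro p h
      apply n1
      rw [← e1 p, h, mul_zero]
    have := count (fun p => θ (Matrix.single p l f)) n2 (by
      intro p q hpq
      rw [← map_star, ← map_mul, Matrix.star_eq_conjTranspose, Matrix.conjTranspose_single,
        Matrix.single_mul_single_of_ne _ _ _ _ hpq, map_zero])
    omega
  rw [Matrix.matrix_eq_sum_single x, map_sum]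
  apply Finset.sum_eq_zero
  intro i _
  rw [map_sum]
  exact Finset.sum_eq_zero fun l _ => hs _ _ _

open scoped Matrix.Norms.L2Operator CStarAlgebra in
lemma reverse (k : ℕ)
    (φ : Matrix (Fin k) (Fin k) C01 →⋆ₙₐ[ℂ] A)
    (h : ∀ I : TwoSidedIdeal A, IsClosed (I : Set A) →
          (∀ x, φ x ∈ I) → ∀ a : A, a ∈ I) (j : ℕ) (hj : j < k)
    (π : A →⋆ₙₐ[ℂ] Matrix (Fin j) (Fin j) ℂ) (a : A) : π a = 0 := by
  have hc : Continuous π := map_continuous π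
  let I : TwoSidedIdeal A := TwoSidedIdeal.mk' {x | π x = 0} (map_zero π)
    (fun {x y} hx hy => by
      have hx : π x = 0 := hx
      have hy : π y = 0 := hy
      show π (x + y) = 0
      rw [map_add, hx, hy, add_zero])
    (fun {x} hx => by
      have hx : π x = 0 := hx
      show π (-x) = 0
      rw [map_neg, hx, neg_zero])
    (fun {x y} hy => by
      have hy : π y = 0 := hy
      show π (x * y) = 0
      rw [map_mul, hy, mul_zero])
    (fun {x y} hx => by
      have hx : π x = 0 := hx
      show π (x * y) = 0
      rw [map_mul, hx, zero_mul])
  have hI : ∀ x, x ∈ I ↔ π x = 0 := fun x => by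
    rw [TwoSidedIdeal.mem_mk']; rfl
  rw [← hI]
  apply h
  · have : (I : Set A) = π ⁻¹' {0} := by
      ext x
      exact hI x
    rw [this]
    exact isClosed_singleton.preimage hc
  · intro x
    rw [hI]
    exact theta_zero hj (π.comp φ) x

end GH

open ZeroAtInfty

/-- **Global Glimm halving for unital C*-algebras of stable rank one (nonseparable case).**
A unital C*-algebra `A` of stable rank one has no nonzero representation of
dimension less than `k` if and only if there is a *-homomorphism from
`M_k(C₀((0,1]))` into `A` with full range. -/
theorem glimm_halving_unital_stableRankOne
    {A : Type*} [CStarAlgebra A]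
    (hsr1 : Dense {a : A | IsUnit a})
    (k : ℕ) (hk : 1 ≤ k) :
    (∀ (j : ℕ), 1 ≤ j → j < k →
        ∀ φ : A →⋆ₙₐ[ℂ] Matrix (Fin j) (Fin j) ℂ, ∀ a : A, φ a = 0) ↔
      ∃ φ : Matrix (Fin k) (Fin k) C₀(↥(Set.Ioc (0:ℝ) 1), ℂ) →⋆ₙₐ[ℂ] A,
        ∀ I : TwoSidedIdeal A, IsClosed (I : Set A) →
          (∀ x, φ x ∈ I) → ∀ a : A, a ∈ I := by
  constructor
  · exact fun h => GH.forward hsr1 k hk h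
  · rintro ⟨φ, hφ⟩ j _ hj π a
    exact GH.reverse k φ hφ j hj π a
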